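/- arXiv:2205.04574 — 3 statements merged into one kernel-verified Lean document; each statement's English description precedes it below -/
import Mathlib

section
/- Let n ≥ 1, 1 ≤ p < ∞, let f ∈ L^p(ℝⁿ), and let ρ : ℝⁿ → ℝ be a nonnegative integrable function with ∫_{ℝⁿ} ρ = 1. Denote by f_ρ = ρ ∗ f the convolution of ρ with f. Then for every t > 0 one has ∫_{ℝⁿ} ∫_{ℝⁿ} p_t(x,y) |f_ρ(y) − f_ρ(x)|^p dy dx ≤ ∫_{ℝⁿ} ∫_{ℝⁿ} p_t(x,y) |f(y) − f(x)|^p dy dx, where both sides are values in [0,∞]. -/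
open Real MeasureTheory

/-!
Let `E(f) = ∫∫ K(x - y) ‖f y - f x‖ ^ p`. Since `ρ ⋆ f` averages the translates `f(· - z)` with
weights `ρ z` of total mass one, Jensen's inequality for `‖·‖ ^ p` bounds `E(ρ ⋆ f)` by the same
average of the energies of the translates, and each of these equals `E(f)` because the kernel
depends on `x - y` only.
-/

open scoped ENNReal Convolution

section Integral

variable {α : Type*} [MeasurableSpace α] {μ : Measure α}

-- Bochner integrals of non-integrable functions are `0`; if `f - g` is integrable, then `f` and `g`
-- are either both integrable or both assigned this value.
theorem enorm_integral_sub_integral_le_lintegral_enorm_sub {F : Type*} [NormedAddCommGroup F]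
    [NormedSpace ℝ F] {f g : α → F} (hfg : AEStronglyMeasurable (f - g) μ) :
    ‖∫ a, f a ∂μ - ∫ a, g a ∂μ‖ₑ ≤ ∫⁻ a, ‖f a - g a‖ₑ ∂μ := by
  obtain htop | hfin := eq_top_or_lt_top (∫⁻ a, ‖f a - g a‖ₑ ∂μ)
  · exact htop ▸ le_top
  have hsub : Integrable (f - g) μ := ⟨hfg, hfin⟩
  have hiff : Integrable f μ ↔ Integrable g μ := by
    simpa using integrable_add_iff_integrable_right (g := g) hsub
  by_cases hf : Integrable f μ
  · rw [← integral_sub hf (hiff.mp hf)]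
    exact enorm_integral_le_lintegral_enorm _
  · simp [integral_undef hf, integral_undef (mt hiff.mpr hf)]

theorem rpow_lintegral_mul_le {w g : α → ℝ≥0∞} (hw : AEMeasurable w μ) (hg : AEMeasurable g μ)
    {p : ℝ} (hp : 1 ≤ p) :
    (∫⁻ a, w a * g a ∂μ) ^ p ≤ (∫⁻ a, w a ∂μ) ^ (p - 1) * ∫⁻ a, w a * g a ^ p ∂μ := by
  have hp0 : 0 < p := one_pos.trans_le hp
  have hinv : 0 ≤ 1 - p⁻¹ := sub_nonneg.mpr (inv_le_one_of_one_le₀ hp)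
  have hsplit (a : α) : w a * g a = w a ^ (1 - p⁻¹) * (w a * g a ^ p) ^ p⁻¹ := by
    rw [ENNReal.mul_rpow_of_nonneg _ _ (by positivity), ENNReal.rpow_rpow_inv hp0.ne', ← mul_assoc,
      ← ENNReal.rpow_add_of_nonneg _ _ hinv (by positivity), sub_add_cancel, ENNReal.rpow_one]
  have holder : ∫⁻ a, w a * g a ∂μ
      ≤ (∫⁻ a, w a ∂μ) ^ (1 - p⁻¹) * (∫⁻ a, w a * g a ^ p ∂μ) ^ p⁻¹ := by
    simp_rw [hsplit]
    exact ENNReal.lintegral_mul_norm_pow_le hw (hw.mul (hg.pow_const p)) hinv (by positivity)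
      (sub_add_cancel _ _)
  calc (∫⁻ a, w a * g a ∂μ) ^ p
      ≤ ((∫⁻ a, w a ∂μ) ^ (1 - p⁻¹) * (∫⁻ a, w a * g a ^ p ∂μ) ^ p⁻¹) ^ p := by gcongr
    _ = (∫⁻ a, w a ∂μ) ^ (p - 1) * ∫⁻ a, w a * g a ^ p ∂μ := by
      rw [ENNReal.mul_rpow_of_nonneg _ _ hp0.le, ENNReal.rpow_inv_rpow hp0.ne', ← ENNReal.rpow_mul,
        sub_mul, one_mul, inv_mul_cancel₀ hp0.ne']

theorem lintegral_lintegral_lintegral_rotate {β γ : Type*} [MeasurableSpace β] [MeasurableSpace γ]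
    {ν : Measure β} {τ : Measure γ} [SFinite μ] [SFinite ν] [SFinite τ] {Φ : α → β → γ → ℝ≥0∞}
    (hΦ : Measurable fun q : (α × β) × γ ↦ Φ q.1.1 q.1.2 q.2) :
    ∫⁻ a, ∫⁻ b, ∫⁻ c, Φ a b c ∂τ ∂ν ∂μ = ∫⁻ c, ∫⁻ a, ∫⁻ b, Φ a b c ∂ν ∂μ ∂τ := by
  calc ∫⁻ a, ∫⁻ b, ∫⁻ c, Φ a b c ∂τ ∂ν ∂μ
      = ∫⁻ a, ∫⁻ c, ∫⁻ b, Φ a b c ∂ν ∂τ ∂μ := by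
        congr with a
        refine lintegral_lintegral_swap (Measurable.aemeasurable ?_)
        exact hΦ.comp (by fun_prop : Measurable fun q : β × γ ↦ ((a, q.1), q.2))
    _ = ∫⁻ c, ∫⁻ a, ∫⁻ b, Φ a b c ∂ν ∂μ ∂τ := by
        refine lintegral_lintegral_swap (Measurable.aemeasurable ?_)
        exact (hΦ.comp (by fun_prop : Measurable fun q : (α × γ) × β ↦
          ((q.1.1, q.2), q.1.2))).lintegral_prod_right'

end Integral

section KernelEnergy

variable {G F : Type*} [AddGroup G] [MeasurableSpace G] [NormedAddCommGroup F]

/-- The `p`-energy `∫∫ K(x - y) ‖f y - f x‖ ^ p` of `f` for a translation-invariant kernel with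
profile `K`. It takes values in `[0, ∞]`; the heat energy is the case where `K` is the
Gauss–Weierstrass kernel. -/
noncomputable def kernelEnergy (ν : Measure G) (K : G → ℝ≥0∞) (p : ℝ) (f : G → F) : ℝ≥0∞ :=
  ∫⁻ x, ∫⁻ y, K (x - y) * ‖f y - f x‖ₑ ^ p ∂ν ∂ν

variable {ν : Measure G} {K : G → ℝ≥0∞} {p : ℝ}

theorem kernelEnergy_congr_ae {f g : G → F} (h : f =ᵐ[ν] g) :
    kernelEnergy ν K p f = kernelEnergy ν K p g := by
  refine lintegral_congr_ae ?_
  filter_upwards [h] with x hx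
  refine lintegral_congr_ae ?_
  filter_upwards [h] with y hy
  rw [hx, hy]

theorem kernelEnergy_comp_sub_right [MeasurableAdd G] [ν.IsAddRightInvariant] (f : G → F) (z : G) :
    kernelEnergy ν K p (fun x ↦ f (x - z)) = kernelEnergy ν K p f := by
  calc kernelEnergy ν K p (fun x ↦ f (x - z))
      = ∫⁻ x, ∫⁻ y, K (x - z - (y - z)) * ‖f (y - z) - f (x - z)‖ₑ ^ p ∂ν ∂ν := by
        simp only [kernelEnergy, sub_sub_sub_cancel_right]
    _ = ∫⁻ x, ∫⁻ y, K (x - z - y) * ‖f y - f (x - z)‖ₑ ^ p ∂ν ∂ν := by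
        congr with x
        exact lintegral_sub_right_eq_self (fun y ↦ K (x - z - y) * ‖f y - f (x - z)‖ₑ ^ p) z
    _ = kernelEnergy ν K p f :=
        lintegral_sub_right_eq_self (fun x ↦ ∫⁻ y, K (x - y) * ‖f y - f x‖ₑ ^ p ∂ν) z

theorem kernelEnergy_ofReal {k : G → ℝ} (hk : ∀ u, 0 ≤ k u) (hp : 0 ≤ p) (f : G → F) :
    kernelEnergy ν (fun u ↦ ENNReal.ofReal (k u)) p f
      = ∫⁻ x, ∫⁻ y, ENNReal.ofReal (k (x - y) * ‖f y - f x‖ ^ p) ∂ν ∂ν := by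
  simp only [kernelEnergy, ENNReal.ofReal_mul (hk _),
    ← ENNReal.ofReal_rpow_of_nonneg (norm_nonneg _) hp, ofReal_norm]

variable [MeasurableAdd₂ G] [MeasurableNeg G]

theorem measurable_enorm_translate_sub_rpow {f : G → F} (hf : StronglyMeasurable f) (p : ℝ) :
    Measurable fun q : (G × G) × G ↦ ‖f (q.1.2 - q.2) - f (q.1.1 - q.2)‖ₑ ^ p :=
  ((hf.comp_measurable (by fun_prop)).sub (hf.comp_measurable (by fun_prop))).enorm.pow_const p

variable [SFinite ν] [ν.IsAddRightInvariant]

theorem lintegral_mul_kernelEnergy_comp_sub_right (hK : Measurable K) {w : G → ℝ≥0∞}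
    (hw : Measurable w) {f : G → F} (hf : StronglyMeasurable f) :
    ∫⁻ x, ∫⁻ y, K (x - y) * ∫⁻ z, w z * ‖f (y - z) - f (x - z)‖ₑ ^ p ∂ν ∂ν ∂ν
      = (∫⁻ z, w z ∂ν) * kernelEnergy ν K p f := by
  have diff_measurable := measurable_enorm_translate_sub_rpow hf p
  have inner_measurable (z : G) :
      Measurable fun q : G × G ↦ K (q.1 - q.2) * ‖f (q.2 - z) - f (q.1 - z)‖ₑ ^ p :=
    (hK.comp measurable_sub).mul (diff_measurable.comp measurable_prodMk_right)
  calc ∫⁻ x, ∫⁻ y, K (x - y) * ∫⁻ z, w z * ‖f (y - z) - f (x - z)‖ₑ ^ p ∂ν ∂ν ∂ν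
      = ∫⁻ x, ∫⁻ y, ∫⁻ z, w z * (K (x - y) * ‖f (y - z) - f (x - z)‖ₑ ^ p) ∂ν ∂ν ∂ν := by
        congr with x
        congr with y
        simp_rw [mul_left_comm (w _)]
        exact (lintegral_const_mul _
          (hw.mul (diff_measurable.comp (measurable_prodMk_left (x := (x, y)))))).symm
    _ = ∫⁻ z, ∫⁻ x, ∫⁻ y, w z * (K (x - y) * ‖f (y - z) - f (x - z)‖ₑ ^ p) ∂ν ∂ν ∂ν :=
        lintegral_lintegral_lintegral_rotate (by fun_prop)
    _ = ∫⁻ z, w z * kernelEnergy ν K p (fun x ↦ f (x - z)) ∂ν := by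
        congr with z
        rw [kernelEnergy, ← lintegral_const_mul _ (inner_measurable z).lintegral_prod_right']
        congr with x
        exact lintegral_const_mul _ ((inner_measurable z).comp measurable_prodMk_left)
    _ = (∫⁻ z, w z ∂ν) * kernelEnergy ν K p f := by
        simp_rw [kernelEnergy_comp_sub_right]
        exact lintegral_mul_const _ hw

end KernelEnergy

section Convolution

variable {𝕜 G E E' F : Type*} [NontriviallyNormedField 𝕜]
  [NormedAddCommGroup E] [NormedSpace 𝕜 E] [NormedAddCommGroup E'] [NormedSpace 𝕜 E']
  [NormedAddCommGroup F] [NormedSpace ℝ F] [NormedSpace 𝕜 F]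
  [AddGroup G] [MeasurableSpace G] [MeasurableAdd₂ G] [MeasurableNeg G]
  {ν : Measure G} [SFinite ν] [ν.IsAddRightInvariant] {ρ : G → E} {f : G → E'} {p : ℝ}

theorem enorm_convolution_sub_convolution_le (L : E →L[𝕜] E' →L[𝕜] F)
    (hρ : AEStronglyMeasurable ρ ν) (hf : AEStronglyMeasurable f ν) (x y : G) :
    ‖(ρ ⋆[L, ν] f) y - (ρ ⋆[L, ν] f) x‖ₑ
      ≤ ‖L‖ₑ * ∫⁻ z, ‖ρ z‖ₑ * ‖f (y - z) - f (x - z)‖ₑ ∂ν := by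
  have integrand_measurable (u : G) : AEStronglyMeasurable (fun z ↦ L (ρ z) (f (u - z))) ν :=
    hρ.convolution_integrand_snd L hf u
  calc ‖(ρ ⋆[L, ν] f) y - (ρ ⋆[L, ν] f) x‖ₑ
      ≤ ∫⁻ z, ‖L (ρ z) (f (y - z)) - L (ρ z) (f (x - z))‖ₑ ∂ν :=
        enorm_integral_sub_integral_le_lintegral_enorm_sub
          ((integrand_measurable y).sub (integrand_measurable x))
    _ ≤ ∫⁻ z, ‖L‖ₑ * (‖ρ z‖ₑ * ‖f (y - z) - f (x - z)‖ₑ) ∂ν := by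
        gcongr with z
        rw [← map_sub, ← mul_assoc]
        exact L.le_opENorm₂ _ _
    _ = ‖L‖ₑ * ∫⁻ z, ‖ρ z‖ₑ * ‖f (y - z) - f (x - z)‖ₑ ∂ν :=
        lintegral_const_mul' _ _ enorm_ne_top

theorem enorm_convolution_sub_convolution_rpow_le (L : E →L[𝕜] E' →L[𝕜] F)
    (hρ : AEStronglyMeasurable ρ ν) (hf : AEStronglyMeasurable f ν) (hp : 1 ≤ p) (x y : G) :
    ‖(ρ ⋆[L, ν] f) y - (ρ ⋆[L, ν] f) x‖ₑ ^ p
      ≤ ‖L‖ₑ ^ p * (∫⁻ z, ‖ρ z‖ₑ ∂ν) ^ (p - 1)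
        * ∫⁻ z, ‖ρ z‖ₑ * ‖f (y - z) - f (x - z)‖ₑ ^ p ∂ν := by
  have translate_measurable (u : G) : AEStronglyMeasurable (fun z ↦ f (u - z)) ν :=
    hf.comp_quasiMeasurePreserving (quasiMeasurePreserving_sub_left_of_right_invariant ν u)
  calc ‖(ρ ⋆[L, ν] f) y - (ρ ⋆[L, ν] f) x‖ₑ ^ p
      ≤ (‖L‖ₑ * ∫⁻ z, ‖ρ z‖ₑ * ‖f (y - z) - f (x - z)‖ₑ ∂ν) ^ p := by
        gcongr
        exact enorm_convolution_sub_convolution_le L hρ hf x y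
    _ = ‖L‖ₑ ^ p * (∫⁻ z, ‖ρ z‖ₑ * ‖f (y - z) - f (x - z)‖ₑ ∂ν) ^ p :=
        ENNReal.mul_rpow_of_nonneg _ _ (by positivity)
    _ ≤ ‖L‖ₑ ^ p * ((∫⁻ z, ‖ρ z‖ₑ ∂ν) ^ (p - 1)
        * ∫⁻ z, ‖ρ z‖ₑ * ‖f (y - z) - f (x - z)‖ₑ ^ p ∂ν) := by
        gcongr
        exact rpow_lintegral_mul_le hρ.enorm
          ((translate_measurable y).sub (translate_measurable x)).enorm hp
    _ = _ := (mul_assoc _ _ _).symm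

theorem kernelEnergy_convolution_le_of_stronglyMeasurable (L : E →L[𝕜] E' →L[𝕜] F)
    (hρ : StronglyMeasurable ρ) (hf : StronglyMeasurable f) {K : G → ℝ≥0∞}
    (hK : Measurable K) (hp : 1 ≤ p) :
    kernelEnergy ν K p (ρ ⋆[L, ν] f) ≤ (‖L‖ₑ * ∫⁻ z, ‖ρ z‖ₑ ∂ν) ^ p * kernelEnergy ν K p f := by
  let m := ∫⁻ z, ‖ρ z‖ₑ ∂ν
  let C := ‖L‖ₑ ^ p * m ^ (p - 1)
  have hm : m ^ (p - 1) * m = m ^ p := by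
    simpa using (ENNReal.rpow_add_of_nonneg (x := m) (p - 1) 1 (by linarith) zero_le_one).symm
  have inner_measurable : Measurable fun q : G × G ↦
      K (q.1 - q.2) * ∫⁻ z, ‖ρ z‖ₑ * ‖f (q.2 - z) - f (q.1 - z)‖ₑ ^ p ∂ν :=
    (hK.comp measurable_sub).mul ((hρ.enorm.comp measurable_snd).mul
      (measurable_enorm_translate_sub_rpow hf p)).lintegral_prod_right'
  calc kernelEnergy ν K p (ρ ⋆[L, ν] f)
      ≤ ∫⁻ x, ∫⁻ y, C * (K (x - y) * ∫⁻ z, ‖ρ z‖ₑ * ‖f (y - z) - f (x - z)‖ₑ ^ p ∂ν) ∂ν ∂ν := by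
        unfold kernelEnergy
        refine lintegral_mono fun x ↦ lintegral_mono fun y ↦ ?_
        rw [mul_left_comm]
        gcongr
        exact enorm_convolution_sub_convolution_rpow_le L hρ.aestronglyMeasurable
          hf.aestronglyMeasurable hp x y
    _ = C * ∫⁻ x, ∫⁻ y, K (x - y) * ∫⁻ z, ‖ρ z‖ₑ * ‖f (y - z) - f (x - z)‖ₑ ^ p ∂ν ∂ν ∂ν := by
        rw [← lintegral_const_mul _ inner_measurable.lintegral_prod_right']
        congr with x
        exact lintegral_const_mul _ (inner_measurable.comp measurable_prodMk_left)
    _ = C * (m * kernelEnergy ν K p f) := by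
        rw [lintegral_mul_kernelEnergy_comp_sub_right hK hρ.enorm hf]
    _ = (‖L‖ₑ * m) ^ p * kernelEnergy ν K p f := by
        rw [ENNReal.mul_rpow_of_nonneg _ _ (by positivity), ← mul_assoc, mul_assoc (‖L‖ₑ ^ p), hm]

theorem kernelEnergy_convolution_le (L : E →L[𝕜] E' →L[𝕜] F)
    (hρ : AEStronglyMeasurable ρ ν) (hf : AEStronglyMeasurable f ν) {K : G → ℝ≥0∞}
    (hK : Measurable K) (hp : 1 ≤ p) :
    kernelEnergy ν K p (ρ ⋆[L, ν] f) ≤ (‖L‖ₑ * ∫⁻ z, ‖ρ z‖ₑ ∂ν) ^ p * kernelEnergy ν K p f := by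
  obtain ⟨ρ', hρ', hρρ'⟩ := hρ
  obtain ⟨f', hf', hff'⟩ := hf
  have hmass : ∫⁻ z, ‖ρ z‖ₑ ∂ν = ∫⁻ z, ‖ρ' z‖ₑ ∂ν := lintegral_congr_ae (hρρ'.fun_comp enorm)
  rw [convolution_congr L hρρ' hff', hmass, kernelEnergy_congr_ae hff']
  exact kernelEnergy_convolution_le_of_stronglyMeasurable L hρ' hf' hK hp

end Convolution

theorem mollification_decreases_heat_energy_general {G F : Type*} [NormedAddCommGroup F]
    [NormedSpace ℝ F] [AddGroup G] [MeasurableSpace G] [MeasurableAdd₂ G] [MeasurableNeg G]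
    {ν : Measure G} [SFinite ν] [ν.IsAddRightInvariant] {k : G → ℝ} (hk0 : ∀ u, 0 ≤ k u)
    (hk : Measurable k) {p : ℝ} (hp : 1 ≤ p) {f : G → F} (hf : AEStronglyMeasurable f ν)
    {ρ : G → ℝ} (hρ : Integrable ρ ν) (hρ1 : ∫ z, ‖ρ z‖ ∂ν ≤ 1) :
    ∫⁻ x, ∫⁻ y, ENNReal.ofReal (k (x - y) *
        ‖(ρ ⋆[.lsmul ℝ ℝ, ν] f) y - (ρ ⋆[.lsmul ℝ ℝ, ν] f) x‖ ^ p) ∂ν ∂ν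
      ≤ ∫⁻ x, ∫⁻ y, ENNReal.ofReal (k (x - y) * ‖f y - f x‖ ^ p) ∂ν ∂ν := by
  have hp0 : 0 ≤ p := zero_le_one.trans hp
  let L : ℝ →L[ℝ] F →L[ℝ] F := .lsmul ℝ ℝ
  have hL : ‖L‖ₑ ≤ 1 := by
    simpa [← ofReal_norm] using ContinuousLinearMap.opNorm_lsmul_le
  have hmass : ∫⁻ z, ‖ρ z‖ₑ ∂ν ≤ 1 := by
    rw [← ofReal_integral_norm_eq_lintegral_enorm hρ]
    exact ENNReal.ofReal_le_one.mpr hρ1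
  simp only [← kernelEnergy_ofReal hk0 hp0]
  calc _ ≤ (‖L‖ₑ * ∫⁻ z, ‖ρ z‖ₑ ∂ν) ^ p * kernelEnergy ν _ p f :=
        kernelEnergy_convolution_le L hρ.aestronglyMeasurable hf hk.ennreal_ofReal hp
    _ ≤ kernelEnergy ν _ p f :=
        mul_le_of_le_one_left' (ENNReal.rpow_le_one (mul_le_one' hL hmass) hp0)

theorem mollification_decreases_heat_energy (n : ℕ) (hn : 1 ≤ n) (p : ℝ) (hp : 1 ≤ p)
    (f : EuclideanSpace ℝ (Fin n) → ℝ) (hf : MemLp f (ENNReal.ofReal p) volume)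
    (ρ : EuclideanSpace ℝ (Fin n) → ℝ) (hρ0 : ∀ x, 0 ≤ ρ x) (hρint : Integrable ρ)
    (hρ1 : ∫ x, ρ x = 1) (t : ℝ) (ht : 0 < t) :
    (∫⁻ x, ∫⁻ y, ENNReal.ofReal
        ((4 * π * t) ^ (-(n : ℝ) / 2) * Real.exp (-‖x - y‖ ^ 2 / (4 * t)) *
          |(∫ w, ρ (y - w) * f w) - (∫ w, ρ (x - w) * f w)| ^ p))
      ≤ ∫⁻ x, ∫⁻ y, ENNReal.ofReal
          ((4 * π * t) ^ (-(n : ℝ) / 2) * Real.exp (-‖x - y‖ ^ 2 / (4 * t)) *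
            |f y - f x| ^ p) := by
  simpa [convolution_lsmul_swap] using mollification_decreases_heat_energy_general (ν := volume)
    (k := fun u : EuclideanSpace ℝ (Fin n) ↦
      (4 * π * t) ^ (-(n : ℝ) / 2) * Real.exp (-‖u‖ ^ 2 / (4 * t)))
    (fun _ ↦ by positivity) (by fun_prop) hp hf.1 hρint (by simp [abs_of_nonneg (hρ0 _), hρ1])
end

section
/- Let n ≥ 1, 1 < p < ∞, and let f ∈ L^p(ℝⁿ). Suppose that liminf_{t → 0⁺} t^{-p/2} ∫_{ℝⁿ} ∫_{ℝⁿ} p_t(x,y) |f(y) − f(x)|^p dy dx < ∞ (liminf taken in [0,∞]). Then f admits a weak gradient in L^p: there exists g : ℝⁿ → ℝⁿ with ∫_{ℝⁿ} ‖g(x)‖^p dx < ∞ such that for every smooth compactly supported φ : ℝⁿ → ℝ and every i ∈ {1,…,n}, ∫_{ℝⁿ} f(x) ∂_i φ(x) dx = − ∫_{ℝⁿ} g_i(x) φ(x) dx; moreover (2Γ(p)/Γ(p/2)) ∫_{ℝⁿ} ‖g(x)‖^p dx ≤ liminf_{t → 0⁺} t^{-p/2} ∫_{ℝⁿ} ∫_{ℝⁿ}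 p_t(x,y) |f(y) − f(x)|^p dy dx. -/
open Real MeasureTheory Filter Topology

/-! Mollification does not increase the heat energy: for fixed `z`, translation invariance and
Jensen's inequality give `‖(ρ ⋆ f)(· - z) - ρ ⋆ f‖_p ≤ ‖f(· - z) - f‖_p`. For differentiable `u`,
the substitution `z = √(2t) w` writes the heat energy as a Gaussian average of difference quotients,
so Fatou's lemma bounds its lower limit below by the Gaussian average over `w` of
`∫ |⟪∇u(x), √2 w⟫|^p dx`, which is `2Γ(p)/Γ(p/2) ∫ ‖∇u‖^p`. Hence this multiple of
`∫ ‖∇(ρ_k ⋆ f)‖^p` is at most the lower limit of the heat energy of `f`, for all mollifiers `ρ_k`.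

As `L^p(ℝⁿ; ℝⁿ)` is uniformly convex, the closed convex hulls of the tails of the bounded sequence
`∇(ρ_k ⋆ f)` have a common point `g`, which obeys the same bound. Every functional that converges
along the sequence takes its limit value at `g`, so integration by parts passes to `f` and `g`.
-/

section UniformlyConvex

variable {X : Type*} [NormedAddCommGroup X] [NormedSpace ℝ X] [UniformConvexSpace X]

theorem exists_pos_forall_norm_sub_lt {ε : ℝ} (hε : 0 < ε) {r : ℝ} (hr : 0 ≤ r) :
    ∃ δ > 0, ∀ x y : X, ‖x‖ < r + δ → ‖y‖ < r + δ → 2 * r - δ < ‖x + y‖ → ‖x - y‖ < ε := by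
  obtain ⟨δ₀, hδ₀, hball⟩ :=
    exists_forall_closed_ball_dist_add_le_two_mul_sub X (ε := ε / 2) (by positivity) r
  refine ⟨min (δ₀ / 4) (ε / 4), by positivity, fun x y hx hy hxy => ?_⟩
  set δ := min (δ₀ / 4) (ε / 4)
  have hδ : 0 < δ := by positivity
  have hδ₁ : δ ≤ δ₀ / 4 := min_le_left _ _
  have hδ₂ : δ ≤ ε / 4 := min_le_right _ _
  set c := r / (r + δ)
  have hc_mul : c * (r + δ) = r := div_mul_cancel₀ _ (by positivity)
  have hc₀ : 0 ≤ c := by positivity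
  have hscale : ∀ z : X, ‖z‖ < r + δ → ‖c • z‖ ≤ r := fun z hz => by
    rw [norm_smul, Real.norm_of_nonneg hc₀]
    nlinarith
  have hshift : ∀ z : X, ‖z‖ ≤ 2 * (r + δ) → ‖z‖ ≤ ‖c • z‖ + 2 * δ := fun z hz => by
    rw [norm_smul, Real.norm_of_nonneg hc₀]
    nlinarith
  by_contra! hfar
  have hclose := hball (hscale x hx) (hscale y hy)
  have hadd := hshift (x + y) (by linarith [norm_add_le x y])
  have hsub := hshift (x - y) (by linarith [norm_sub_le x y])
  rw [smul_add] at hadd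
  rw [smul_sub] at hsub
  linarith [hclose (by linarith)]

/- Šmulian's property. Near-minimizers of the norm on the sets form a Cauchy sequence. -/
theorem nonempty_iInter_of_antitone_convex [CompleteSpace X] {C : ℕ → Set X} (hC : Antitone C)
    (hne : ∀ n, (C n).Nonempty) (hclosed : ∀ n, IsClosed (C n)) (hconv : ∀ n, Convex ℝ (C n))
    {R : ℝ} (hR : ∀ n, C n ⊆ Metric.closedBall 0 R) : (⋂ n, C n).Nonempty := by
  set d : ℕ → ℝ := fun n => Metric.infDist 0 (C n)
  have hd_mono : Monotone d := fun m n hmn => Metric.infDist_le_infDist_of_subset (hC hmn) (hne n)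
  have hd_le : ∀ n, ∀ x ∈ C n, d n ≤ ‖x‖ := fun n x hx => by
    simpa only [dist_zero_left] using Metric.infDist_le_dist_of_mem (x := 0) hx
  have hd_bdd : BddAbove (Set.range d) := by
    refine ⟨R, ?_⟩
    rintro _ ⟨n, rfl⟩
    obtain ⟨x, hx⟩ := hne n
    exact (hd_le n x hx).trans (by simpa only [mem_closedBall_zero_iff] using hR n hx)
  have hd_tendsto := tendsto_atTop_ciSup hd_mono hd_bdd
  set D := ⨆ n, d n
  have hD : 0 ≤ D := Metric.infDist_nonneg.trans (le_ciSup hd_bdd 0)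
  have hnear : ∀ n : ℕ, ∃ x ∈ C n, ‖x‖ < d n + 1 / ((n : ℝ) + 1) := fun n => by
    simpa only [dist_zero_left] using
      (Metric.infDist_lt_iff (hne n)).1 (lt_add_of_pos_right (d n) (by positivity))
  choose x hxC hx using hnear
  have hcauchy : CauchySeq x := by
    refine Metric.cauchySeq_iff.2 fun ε hε => ?_
    obtain ⟨δ, hδ, hclose⟩ := exists_pos_forall_norm_sub_lt (X := X) hε hD
    obtain ⟨N, hN_d, hN_inv⟩ :=
      ((hd_tendsto.eventually (lt_mem_nhds (by linarith : D - δ / 2 < D))).and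
        (tendsto_one_div_add_atTop_nhds_zero_nat.eventually (gt_mem_nhds hδ))).exists
    have hnorm : ∀ m ≥ N, ‖x m‖ < D + δ := fun m hm =>
      (hx m).trans (add_lt_add_of_le_of_lt (le_ciSup hd_bdd m)
        ((one_div_le_one_div_of_le (by positivity) (by gcongr)).trans_lt hN_inv))
    refine ⟨N, fun m hm n hn => (dist_eq_norm (x m) (x n)).trans_lt
      (hclose _ _ (hnorm m hm) (hnorm n hn) ?_)⟩
    have hmid : d N ≤ ‖midpoint ℝ (x m) (x n)‖ :=
      hd_le N _ ((hconv N).midpoint_mem (hC hm (hxC m)) (hC hn (hxC n)))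
    rw [midpoint_eq_smul_add, norm_smul, invOf_eq_inv, norm_inv, Real.norm_two] at hmid
    linarith
  obtain ⟨y, hy⟩ := cauchySeq_tendsto_of_complete hcauchy
  exact ⟨y, Set.mem_iInter.2 fun n => (hclosed n).mem_of_tendsto hy
    ((eventually_ge_atTop n).mono fun m hm => hC hm (hxC m))⟩

theorem exists_norm_le_forall_clm_apply_eq [CompleteSpace X] {u : ℕ → X} {R : ℝ}
    (hu : ∀ n, ‖u n‖ ≤ R) :
    ∃ x, ‖x‖ ≤ R ∧ ∀ (ℓ : X →L[ℝ] ℝ) (a : ℝ), Tendsto (fun n => ℓ (u n)) atTop (𝓝 a) → ℓ x = a := by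
  set C : ℕ → Set X := fun n => closure (convexHull ℝ (u '' Set.Ici n))
  have hball : ∀ n, C n ⊆ Metric.closedBall 0 R := fun n =>
    closure_minimal (convexHull_min (Set.image_subset_iff.2 fun k _ => by
      simpa only [Set.mem_preimage, mem_closedBall_zero_iff] using hu k)
      (convex_closedBall 0 R)) Metric.isClosed_closedBall
  obtain ⟨x, hx⟩ := nonempty_iInter_of_antitone_convex (C := C)
    (fun m n hmn => closure_mono (convexHull_mono (Set.image_mono (Set.Ici_subset_Ici.2 hmn))))
    (fun n => ((Set.nonempty_Ici.image u).convexHull).closure) (fun n => isClosed_closure)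
    (fun n => (convex_convexHull ℝ _).closure) hball
  rw [Set.mem_iInter] at hx
  refine ⟨x, mem_closedBall_zero_iff.1 (hball 0 (hx 0)), fun ℓ a hℓ => ?_⟩
  refine eq_of_forall_dist_le fun ε hε => ?_
  obtain ⟨N, hN⟩ := eventually_atTop.1 (hℓ.eventually (Metric.closedBall_mem_nhds a hε))
  have hsub : C N ⊆ ℓ ⁻¹' Metric.closedBall a ε :=
    closure_minimal (convexHull_min (Set.image_subset_iff.2 hN)
      ((convex_closedBall a ε).linear_preimage ℓ.toLinearMap))
      (Metric.isClosed_closedBall.preimage ℓ.continuous)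
  exact hsub (hx N)

end UniformlyConvex

section LpUniformlyConvex

theorem strictConvexOn_norm_rpow {E : Type*} [NormedAddCommGroup E] [NormedSpace ℝ E]
    [StrictConvexSpace ℝ E] {p : ℝ} (hp : 1 < p) :
    StrictConvexOn ℝ Set.univ fun x : E => ‖x‖ ^ p := by
  refine ⟨convex_univ, fun x _ y _ hxy a b ha hb hab => ?_⟩
  have hp₀ : 0 < p := one_pos.trans hp
  have hcombo : ‖a • x + b • y‖ ≤ a * ‖x‖ + b * ‖y‖ := by
    simpa only [norm_smul, Real.norm_of_nonneg ha.le, Real.norm_of_nonneg hb.le]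
      using norm_add_le (a • x) (b • y)
  rcases eq_or_ne ‖x‖ ‖y‖ with hnorm | hnorm
  · have hlt := norm_combo_lt_of_ne le_rfl hnorm.ge hxy ha hb hab
    calc ‖a • x + b • y‖ ^ p < ‖x‖ ^ p := rpow_lt_rpow (norm_nonneg _) hlt hp₀
      _ = a • ‖x‖ ^ p + b • ‖y‖ ^ p := by rw [← hnorm, ← add_smul, hab, one_smul]
  · calc ‖a • x + b • y‖ ^ p ≤ (a * ‖x‖ + b * ‖y‖) ^ p := by gcongr
      _ < a • ‖x‖ ^ p + b • ‖y‖ ^ p :=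
        (strictConvexOn_rpow hp).2 (norm_nonneg x) (norm_nonneg y) hnorm ha hb hab

theorem exists_forall_le_mul_of_homogeneous {X : Type*} [NormedAddCommGroup X] [NormedSpace ℝ X]
    [ProperSpace X] {p : ℝ} (hp : p ≠ 0) {F G : X → ℝ} (hF : Continuous F) (hG : Continuous G)
    (hF_smul : ∀ r ≥ 0, ∀ x, F (r • x) = r ^ p * F x)
    (hG_smul : ∀ r ≥ 0, ∀ x, G (r • x) = r ^ p * G x)
    (hG_nonneg : ∀ x, 0 ≤ G x) (hFG : ∀ x ≠ 0, G x = 0 → F x < 0) :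
    ∃ C > 0, ∀ x, F x ≤ C * G x := by
  set K : Set X := Metric.sphere 0 1 ∩ {x | 0 ≤ F x}
  have hK : IsCompact K :=
    (isCompact_sphere 0 1).inter_right (isClosed_le continuous_const hF)
  have hG_pos : ∀ x ∈ K, 0 < G x := fun x hx => (hG_nonneg x).lt_of_ne' fun h =>
    (hFG x (ne_zero_of_mem_unit_sphere ⟨x, hx.1⟩) h).not_ge hx.2
  obtain ⟨M, hM⟩ := hK.bddAbove_image
    (hF.continuousOn.div hG.continuousOn fun x hx => (hG_pos x hx).ne')
  have hsphere : ∀ x ∈ Metric.sphere (0 : X) 1, F x ≤ max 1 M * G x := fun x hx => by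
    rcases lt_or_ge (F x) 0 with hneg | hnonneg
    · exact hneg.le.trans (mul_nonneg (by positivity) (hG_nonneg x))
    · rw [← div_le_iff₀ (hG_pos x ⟨hx, hnonneg⟩)]
      exact (hM (Set.mem_image_of_mem _ ⟨hx, hnonneg⟩)).trans (le_max_right _ _)
  refine ⟨max 1 M, by positivity, fun x => ?_⟩
  rcases eq_or_ne x 0 with rfl | hx
  · have hF₀ := hF_smul 0 le_rfl 0
    have hG₀ := hG_smul 0 le_rfl 0
    rw [smul_zero, zero_rpow hp, zero_mul] at hF₀ hG₀
    rw [hF₀, hG₀, mul_zero]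
  · have hunit : ‖x‖⁻¹ • x ∈ Metric.sphere (0 : X) 1 :=
      mem_sphere_zero_iff_norm.2 (norm_smul_inv_norm (𝕜 := ℝ) hx)
    have hx_eq : x = ‖x‖ • ‖x‖⁻¹ • x := (smul_inv_smul₀ (norm_ne_zero_iff.2 hx) x).symm
    rw [hx_eq, hF_smul _ (norm_nonneg x), hG_smul _ (norm_nonneg x), mul_left_comm]
    exact mul_le_mul_of_nonneg_left (hsphere _ hunit) (by positivity)

theorem exists_norm_sub_rpow_le {E : Type*} [NormedAddCommGroup E] [NormedSpace ℝ E]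
    [ProperSpace E] [StrictConvexSpace ℝ E] {p : ℝ} (hp : 1 < p) {ε : ℝ} (hε : 0 < ε) :
    ∃ C > 0, ∀ a b : E, ‖a - b‖ ^ p ≤ ε * (‖a‖ ^ p + ‖b‖ ^ p) +
      C * ((‖a‖ ^ p + ‖b‖ ^ p) / 2 - ‖(2⁻¹ : ℝ) • (a + b)‖ ^ p) := by
  have hp₀ : 0 < p := one_pos.trans hp
  have hsmul : ∀ r ≥ 0, ∀ x : E, ‖r • x‖ ^ p = r ^ p * ‖x‖ ^ p := fun r hr x => by
    rw [norm_smul, mul_rpow (norm_nonneg r) (norm_nonneg x), Real.norm_of_nonneg hr]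
  have hconv := strictConvexOn_norm_rpow (E := E) hp
  have htwo : (2⁻¹ : ℝ) + 2⁻¹ = 1 := by norm_num
  obtain ⟨C, hC, hle⟩ := exists_forall_le_mul_of_homogeneous (X := E × E) hp₀.ne'
    (F := fun x => ‖x.1 - x.2‖ ^ p - ε * (‖x.1‖ ^ p + ‖x.2‖ ^ p))
    (G := fun x => (‖x.1‖ ^ p + ‖x.2‖ ^ p) / 2 - ‖(2⁻¹ : ℝ) • (x.1 + x.2)‖ ^ p)
    (by fun_prop (disch := exact hp₀.le)) (by fun_prop (disch := exact hp₀.le))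
    (fun r hr x => by
      simp only [Prod.smul_fst, Prod.smul_snd, ← smul_sub, hsmul r hr]
      ring)
    (fun r hr x => by
      simp only [Prod.smul_fst, Prod.smul_snd, ← smul_add, smul_comm (2⁻¹ : ℝ) r, hsmul r hr]
      ring)
    (fun x => by
      have := hconv.convexOn.2 (Set.mem_univ x.1) (Set.mem_univ x.2)
        (by norm_num : (0 : ℝ) ≤ 2⁻¹) (by norm_num : (0 : ℝ) ≤ 2⁻¹) htwo
      simp only [← smul_add, smul_eq_mul] at this
      linarith)
    (fun x hx hG => by
      have heq : x.1 = x.2 := by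
        by_contra hne
        have := hconv.2 (Set.mem_univ x.1) (Set.mem_univ x.2) hne
          (by norm_num : (0 : ℝ) < 2⁻¹) (by norm_num : (0 : ℝ) < 2⁻¹) htwo
        simp only [← smul_add, smul_eq_mul] at this
        linarith
      have hx₁ : x.1 ≠ 0 := fun h => hx (Prod.ext h (heq ▸ h))
      have : 0 < ‖x.1‖ ^ p := rpow_pos_of_pos (norm_pos_iff.2 hx₁) p
      simp only [← heq, sub_self, norm_zero, zero_rpow hp₀.ne']
      nlinarith)
  exact ⟨C, hC, fun a b => by linarith [hle (a, b)]⟩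

open scoped ENNReal

variable {α E : Type*} [MeasurableSpace α] {μ : Measure α} [NormedAddCommGroup E]

theorem norm_Lp_rpow_eq_integral {p : ℝ≥0∞} (hp₀ : p ≠ 0) (hp : p ≠ ⊤) (f : Lp E p μ) :
    ‖f‖ ^ p.toReal = ∫ x, ‖f x‖ ^ p.toReal ∂μ := by
  have hnonneg : 0 ≤ ∫ x, ‖f x‖ ^ p.toReal ∂μ := integral_nonneg fun x => by positivity
  rw [Lp.norm_def, (Lp.memLp f).eLpNorm_eq_integral_rpow_norm hp₀ hp,
    ENNReal.toReal_ofReal (by positivity),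
    rpow_inv_rpow hnonneg (ENNReal.toReal_pos hp₀ hp).ne']

variable [NormedSpace ℝ E]

theorem norm_Lp_sub_rpow_le {p : ℝ≥0∞} [Fact (1 ≤ p)] (hp : p ≠ ⊤) {η C : ℝ}
    (hE : ∀ a b : E, ‖a - b‖ ^ p.toReal ≤ η * (‖a‖ ^ p.toReal + ‖b‖ ^ p.toReal) +
      C * ((‖a‖ ^ p.toReal + ‖b‖ ^ p.toReal) / 2 - ‖(2⁻¹ : ℝ) • (a + b)‖ ^ p.toReal))
    (f g : Lp E p μ) :
    ‖f - g‖ ^ p.toReal ≤ η * (‖f‖ ^ p.toReal + ‖g‖ ^ p.toReal) +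
      C * ((‖f‖ ^ p.toReal + ‖g‖ ^ p.toReal) / 2 - ‖(2⁻¹ : ℝ) • (f + g)‖ ^ p.toReal) := by
  have hp₀ : p ≠ 0 := (one_pos.trans_le (Fact.out : 1 ≤ p)).ne'
  have hint : ∀ h : Lp E p μ, Integrable (fun x => ‖h x‖ ^ p.toReal) μ := fun h =>
    (Lp.memLp h).integrable_norm_rpow hp₀ hp
  have hsum_int : Integrable (fun x => ‖f x‖ ^ p.toReal + ‖g x‖ ^ p.toReal) μ :=
    (hint f).add (hint g)
  have hdefect_int : Integrable (fun x => (‖f x‖ ^ p.toReal + ‖g x‖ ^ p.toReal) / 2 -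
      ‖((2⁻¹ : ℝ) • (f + g)) x‖ ^ p.toReal) μ := (hsum_int.div_const 2).sub (hint _)
  simp only [norm_Lp_rpow_eq_integral hp₀ hp]
  rw [← integral_add (hint f) (hint g), ← integral_const_mul, ← integral_div,
    ← integral_sub (hsum_int.div_const 2) (hint _), ← integral_const_mul,
    ← integral_add (hsum_int.const_mul η) (hdefect_int.const_mul C)]
  refine integral_mono_ae (hint (f - g))
    ((hsum_int.const_mul η).add (hdefect_int.const_mul C)) ?_
  filter_upwards [Lp.coeFn_sub f g, Lp.coeFn_smul (2⁻¹ : ℝ) (f + g), Lp.coeFn_add f g]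
    with x hsub hsmul hadd
  simpa only [hsub, hsmul, hadd, Pi.sub_apply, Pi.smul_apply, Pi.add_apply]
    using hE (f x) (g x)

theorem uniformConvexSpace_Lp [ProperSpace E] [StrictConvexSpace ℝ E] {p : ℝ≥0∞} [Fact (1 ≤ p)]
    (hp : 1 < p) (hp_top : p ≠ ⊤) : UniformConvexSpace (Lp E p μ) := by
  set q := p.toReal
  have hq : 1 < q := by
    simpa only [ENNReal.toReal_one] using (ENNReal.toReal_lt_toReal ENNReal.one_ne_top hp_top).2 hp
  have hq₀ : 0 < q := one_pos.trans hq
  refine ⟨fun ε hε => ?_⟩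
  obtain ⟨C, hC, hdefect⟩ := exists_norm_sub_rpow_le (E := E) hq (ε := ε ^ q / 4) (by positivity)
  set κ := ε ^ q / (2 * C) with hκ
  refine ⟨2 * (κ / q), by positivity, fun f hf g hg hfg => ?_⟩
  set m := ‖(2⁻¹ : ℝ) • (f + g)‖ with hm
  have hm₀ : 0 ≤ m := norm_nonneg _
  have hm_rpow : m ^ q ≤ 1 - κ := by
    have hle : ‖f - g‖ ^ q ≤ ε ^ q / 4 * (‖f‖ ^ q + ‖g‖ ^ q) +
        C * ((‖f‖ ^ q + ‖g‖ ^ q) / 2 - m ^ q) := norm_Lp_sub_rpow_le hp_top hdefect f g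
    have hε_le : ε ^ q ≤ ‖f - g‖ ^ q := by gcongr
    have hκC : C * κ = ε ^ q / 2 := by rw [hκ]; field_simp
    rw [hf, hg, one_rpow] at hle
    refine le_of_mul_le_mul_left ?_ hC
    linarith
  have hκ_le : κ ≤ 1 := by linarith [rpow_nonneg hm₀ q]
  have hκq : κ / q ≤ 1 := div_le_one_of_le₀ (hκ_le.trans hq.le) hq₀.le
  have hbernoulli : 1 - κ ≤ (1 - κ / q) ^ q := by
    simpa only [mul_neg, mul_div_cancel₀ κ hq₀.ne', ← sub_eq_add_neg]
      using one_add_mul_self_le_rpow_one_add (s := -(κ / q)) (by linarith) hq.le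
  have hm_le : m ≤ 1 - κ / q :=
    (rpow_le_rpow_iff hm₀ (by linarith) hq₀).1 (hm_rpow.trans hbernoulli)
  rw [hm, norm_smul, norm_inv, Real.norm_two] at hm_le
  linarith

end LpUniformlyConvex

section WeakLimit

open scoped ENNReal

variable {α E : Type*} [MeasurableSpace α] {μ : Measure α} [NormedAddCommGroup E]
  [InnerProductSpace ℝ E] [FiniteDimensional ℝ E]

theorem exists_memLp_forall_integral_inner_eq {p q : ℝ≥0∞} [p.HolderConjugate q] (hp : 1 < p)
    (hp_top : p ≠ ⊤) {G : ℕ → α → E} (hG : ∀ k, AEStronglyMeasurable (G k) μ) {R : ℝ≥0∞}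
    (hR : R ≠ ⊤) (hGR : ∀ k, eLpNorm (G k) p μ ≤ R) :
    ∃ g : α → E, MemLp g p μ ∧ eLpNorm g p μ ≤ R ∧ ∀ h : α → E, MemLp h q μ → ∀ a,
      Tendsto (fun k => ∫ x, inner ℝ (G k x) (h x) ∂μ) atTop (𝓝 a) →
      ∫ x, inner ℝ (g x) (h x) ∂μ = a := by
  have : Fact (1 ≤ p) := ⟨hp.le⟩
  have : Fact (1 ≤ q) := ⟨ENNReal.HolderConjugate.one_le q p⟩
  have := uniformConvexSpace_Lp (E := E) (μ := μ) hp hp_top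
  have hG_mem : ∀ k, MemLp (G k) p μ := fun k => ⟨hG k, (hGR k).trans_lt hR.lt_top⟩
  obtain ⟨g, hg, hlim⟩ := exists_norm_le_forall_clm_apply_eq (u := fun k => (hG_mem k).toLp)
    (R := R.toReal) fun k => by
      rw [Lp.norm_toLp]
      exact ENNReal.toReal_mono hR (hGR k)
  refine ⟨g, Lp.memLp g, ?_, fun h hh a ha => ?_⟩
  · rwa [Lp.norm_def, ENNReal.toReal_le_toReal (Lp.eLpNorm_ne_top g) hR] at hg
  · set ℓ := ((innerSL ℝ (E := E)).lpPairing μ p q).flip hh.toLp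
    have hℓ : ∀ (w : Lp E p μ) (w' : α → E), w =ᵐ[μ] w' →
        ℓ w = ∫ x, inner ℝ (w' x) (h x) ∂μ := fun w w' hw => by
      rw [ContinuousLinearMap.flip_apply, ContinuousLinearMap.lpPairing_eq_integral]
      refine integral_congr_ae ?_
      filter_upwards [hh.coeFn_toLp, hw] with x hx hwx
      rw [hx, hwx, innerSL_apply_apply]
    rw [← hℓ g g ae_eq_rfl]
    refine hlim ℓ a (ha.congr fun k => (hℓ _ _ (hG_mem k).coeFn_toLp).symm)

end WeakLimit

section WeakGradient

open scoped ENNReal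

variable {E : Type*} [NormedAddCommGroup E] [InnerProductSpace ℝ E] [MeasurableSpace E]
  [BorelSpace E] [FiniteDimensional ℝ E]

/-- `g` is a weak (distributional) gradient of `f`. The notion is meant for locally integrable `f`
and `g`: otherwise the Bochner integrals may take their default value `0`. -/
def IsWeakGradient (f : E → ℝ) (g : E → E) : Prop :=
  ∀ φ : E → ℝ, ContDiff ℝ (⊤ : ℕ∞) φ → HasCompactSupport φ → ∀ v : E,
    ∫ x, f x * fderiv ℝ φ x v = -∫ x, inner ℝ (g x) v * φ x

theorem isWeakGradient_gradient {u : E → ℝ} (hu : ContDiff ℝ 1 u) :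
    IsWeakGradient u (gradient u) := by
  intro φ hφ hφ_supp v
  have hu' : Continuous fun x => fderiv ℝ u x v :=
    (hu.continuous_fderiv one_ne_zero).clm_apply continuous_const
  have hφ' : Continuous fun x => fderiv ℝ φ x v :=
    (hφ.continuous_fderiv (by simp)).clm_apply continuous_const
  simp only [inner_gradient_left]
  exact integral_mul_fderiv_eq_neg_fderiv_mul_of_integrable
    ((hu'.mul hφ.continuous).integrable_of_hasCompactSupport hφ_supp.mul_left)
    ((hu.continuous.mul hφ').integrable_of_hasCompactSupport (hφ_supp.fderiv_apply ℝ v).mul_left)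
    ((hu.continuous.mul hφ.continuous).integrable_of_hasCompactSupport hφ_supp.mul_left)
    (fun x _ => hu.differentiable one_ne_zero x) (fun x _ => hφ.differentiable (by simp) x)

theorem exists_isWeakGradient_of_tendsto {p : ℝ≥0∞} (hp : 1 < p) (hp_top : p ≠ ⊤) {u : ℕ → E → ℝ}
    (hu : ∀ k, ContDiff ℝ 1 (u k)) {R : ℝ≥0∞} (hR : R ≠ ⊤)
    (huR : ∀ k, eLpNorm (gradient (u k)) p volume ≤ R) {f : E → ℝ}
    (huf : ∀ ψ : E → ℝ, Continuous ψ → HasCompactSupport ψ →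
      Tendsto (fun k => ∫ x, u k x * ψ x) atTop (𝓝 (∫ x, f x * ψ x))) :
    ∃ g : E → E, MemLp g p volume ∧ eLpNorm g p volume ≤ R ∧ IsWeakGradient f g := by
  have := ENNReal.HolderConjugate.inv_one_sub_inv' hp.le
  have hgrad : ∀ k, AEStronglyMeasurable (gradient (u k)) volume := fun k =>
    ((InnerProductSpace.toDual ℝ E).symm.continuous.comp
      ((hu k).continuous_fderiv one_ne_zero)).aestronglyMeasurable
  obtain ⟨g, hg, hgR, hlim⟩ := exists_memLp_forall_integral_inner_eq (q := (1 - p⁻¹)⁻¹)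
    hp hp_top hgrad hR huR
  refine ⟨g, hg, hgR, fun φ hφ hφ_supp v => ?_⟩
  have hmem : MemLp (fun x => φ x • v) (1 - p⁻¹)⁻¹ (volume : Measure E) :=
    (hφ.continuous.smul continuous_const).memLp_of_hasCompactSupport hφ_supp.smul_right
  have hparts : ∀ k, -∫ x, u k x * fderiv ℝ φ x v = ∫ x, inner ℝ (gradient (u k) x) (φ x • v) :=
    fun k => by
      simp only [isWeakGradient_gradient (hu k) φ hφ hφ_supp v, neg_neg, inner_smul_right, mul_comm]
  have hweak := hlim _ hmem (-∫ x, f x * fderiv ℝ φ x v)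
    ((huf _ ((hφ.continuous_fderiv (by simp)).clm_apply continuous_const)
      (hφ_supp.fderiv_apply ℝ v)).neg.congr hparts)
  simp only [inner_smul_right, mul_comm (φ _)] at hweak
  rw [hweak, neg_neg]

end WeakGradient

section Mollification

open scoped ENNReal Convolution

theorem enorm_integral_rpow_le {Ω F : Type*} [MeasurableSpace Ω] [NormedAddCommGroup F]
    [NormedSpace ℝ F] {ν : Measure Ω} [IsProbabilityMeasure ν] {h : Ω → F}
    (hh : AEStronglyMeasurable h ν) {p : ℝ} (hp : 1 ≤ p) :
    ‖∫ w, h w ∂ν‖ₑ ^ p ≤ ∫⁻ w, ‖h w‖ₑ ^ p ∂ν := by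
  have hp₀ : 0 < p := one_pos.trans_le hp
  rw [lintegral_rpow_enorm_eq_rpow_eLpNorm' hp₀]
  gcongr
  calc ‖∫ w, h w ∂ν‖ₑ ≤ eLpNorm' h 1 ν := by
        simpa only [eLpNorm'_eq_lintegral_enorm, ENNReal.rpow_one, div_one]
          using enorm_integral_le_lintegral_enorm h
    _ ≤ eLpNorm' h p ν := eLpNorm'_le_eLpNorm'_of_exponent_le one_pos hp ν hh

theorem lintegral_ofReal_eq_one {Ω : Type*} [MeasurableSpace Ω] {μ : Measure Ω} {ρ : Ω → ℝ}
    (hρ : ∀ w, 0 ≤ ρ w) (hρ_int : ∫ w, ρ w ∂μ = 1) : ∫⁻ w, ENNReal.ofReal (ρ w) ∂μ = 1 := by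
  rw [← ofReal_integral_eq_lintegral_ofReal (integrable_of_integral_eq_one hρ_int)
    (ae_of_all _ hρ), hρ_int, ENNReal.ofReal_one]

theorem enorm_integral_smul_rpow_le {Ω F : Type*} [MeasurableSpace Ω] [NormedAddCommGroup F]
    [NormedSpace ℝ F] {μ : Measure Ω} {ρ : Ω → ℝ} (hρ : ∀ w, 0 ≤ ρ w) (hρ_int : ∫ w, ρ w ∂μ = 1)
    {h : Ω → F} (hh : AEStronglyMeasurable h μ) {p : ℝ} (hp : 1 ≤ p) :
    ‖∫ w, ρ w • h w ∂μ‖ₑ ^ p ≤ ∫⁻ w, ENNReal.ofReal (ρ w) * ‖h w‖ₑ ^ p ∂μ := by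
  have hρ_meas : AEMeasurable (fun w => ENNReal.ofReal (ρ w)) μ :=
    (integrable_of_integral_eq_one hρ_int).aemeasurable.ennreal_ofReal
  set ν := μ.withDensity fun w => ENNReal.ofReal (ρ w)
  have : IsProbabilityMeasure ν := ⟨by
    rw [withDensity_apply _ MeasurableSet.univ, Measure.restrict_univ,
      lintegral_ofReal_eq_one hρ hρ_int]⟩
  have hle := enorm_integral_rpow_le (hh.mono_ac (withDensity_absolutelyContinuous μ _) :
    AEStronglyMeasurable h ν) hp
  rw [integral_withDensity_eq_integral_toReal_smul₀ hρ_meas (ae_of_all _ fun w =>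
    ENNReal.ofReal_lt_top), lintegral_withDensity_eq_lintegral_mul₀ hρ_meas
    (hh.enorm.pow_const p)] at hle
  simpa only [ENNReal.toReal_ofReal (hρ _), Pi.mul_apply] using hle

section Group

variable {G F : Type*} [AddCommGroup G] [MeasurableSpace G] [MeasurableAdd₂ G] [MeasurableNeg G]
  {μ : Measure G} [SFinite μ] [μ.IsAddRightInvariant] [NormedAddCommGroup F] [NormedSpace ℝ F]

theorem lintegral_convolution_rpow_le {ρ : G → ℝ} (hρ : ∀ w, 0 ≤ ρ w) (hρ_int : ∫ w, ρ w ∂μ = 1)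
    {h : G → F} (hh : AEStronglyMeasurable h μ) {p : ℝ} (hp : 1 ≤ p) :
    ∫⁻ x, ‖(ρ ⋆[ContinuousLinearMap.lsmul ℝ ℝ, μ] h) x‖ₑ ^ p ∂μ ≤ ∫⁻ x, ‖h x‖ₑ ^ p ∂μ := by
  have hρ_meas : AEMeasurable (fun w => ENNReal.ofReal (ρ w)) μ :=
    (integrable_of_integral_eq_one hρ_int).aemeasurable.ennreal_ofReal
  have hh_sub : AEStronglyMeasurable (fun q : G × G => h (q.1 - q.2)) (μ.prod μ) :=
    hh.comp_quasiMeasurePreserving (quasiMeasurePreserving_sub_of_right_invariant μ μ)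
  calc ∫⁻ x, ‖(ρ ⋆[ContinuousLinearMap.lsmul ℝ ℝ, μ] h) x‖ₑ ^ p ∂μ
      ≤ ∫⁻ x, ∫⁻ w, ENNReal.ofReal (ρ w) * ‖h (x - w)‖ₑ ^ p ∂μ ∂μ :=
        lintegral_mono fun x => enorm_integral_smul_rpow_le hρ hρ_int
          (hh.comp_quasiMeasurePreserving (quasiMeasurePreserving_sub_left_of_right_invariant μ x))
          hp
    _ = ∫⁻ w, ∫⁻ x, ENNReal.ofReal (ρ w) * ‖h (x - w)‖ₑ ^ p ∂μ ∂μ :=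
        lintegral_lintegral_swap (hρ_meas.comp_snd.mul (hh_sub.enorm.pow_const p))
    _ = ∫⁻ w, ENNReal.ofReal (ρ w) * ∫⁻ x, ‖h x‖ₑ ^ p ∂μ ∂μ := lintegral_congr fun w => by
        rw [lintegral_const_mul' _ _ ENNReal.ofReal_ne_top,
          lintegral_sub_right_eq_self (fun x => ‖h x‖ₑ ^ p) w]
    _ = ∫⁻ x, ‖h x‖ₑ ^ p ∂μ := by
        rw [lintegral_mul_const'' _ hρ_meas, lintegral_ofReal_eq_one hρ hρ_int, one_mul]

theorem lintegral_convolution_sub_rpow_le {ρ : G → ℝ} (hρ : ∀ w, 0 ≤ ρ w)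
    (hρ_int : ∫ w, ρ w ∂μ = 1) {f : G → F} (hf : AEStronglyMeasurable f μ)
    (hρf : ConvolutionExists ρ f (ContinuousLinearMap.lsmul ℝ ℝ) μ) {p : ℝ} (hp : 1 ≤ p) (z : G) :
    ∫⁻ x, ‖(ρ ⋆[ContinuousLinearMap.lsmul ℝ ℝ, μ] f) (x - z) -
        (ρ ⋆[ContinuousLinearMap.lsmul ℝ ℝ, μ] f) x‖ₑ ^ p ∂μ
      ≤ ∫⁻ x, ‖f (x - z) - f x‖ₑ ^ p ∂μ := by
  have hf_sub : AEStronglyMeasurable (fun x => f (x - z)) μ :=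
    hf.comp_measurePreserving (measurePreserving_sub_right μ z)
  have hcomm : ∀ x, (ρ ⋆[ContinuousLinearMap.lsmul ℝ ℝ, μ] f) (x - z) -
      (ρ ⋆[ContinuousLinearMap.lsmul ℝ ℝ, μ] f) x =
      (ρ ⋆[ContinuousLinearMap.lsmul ℝ ℝ, μ] fun y => f (y - z) - f y) x := fun x => by
    rw [convolution_def, convolution_def,
      ← integral_sub (hρf (x - z)).integrable (hρf x).integrable]
    simp only [convolution_def, map_sub, sub_right_comm x z]
  simp only [hcomm]
  exact lintegral_convolution_rpow_le hρ hρ_int (hf_sub.sub hf) hp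

end Group

theorem tendsto_integral_convolution_mul {E : Type*} [NormedAddCommGroup E] [NormedSpace ℝ E]
    [FiniteDimensional ℝ E] [MeasurableSpace E] [BorelSpace E] {μ : Measure E} [μ.IsAddHaarMeasure]
    {ι : Type*} {l : Filter ι} {ρ : ι → ContDiffBump (0 : E)}
    (hρ : Tendsto (fun i => (ρ i).rOut) l (𝓝 0)) {f : E → ℝ} (hf : LocallyIntegrable f μ)
    {ψ : E → ℝ} (hψ : Continuous ψ) (hψ_supp : HasCompactSupport ψ) :
    Tendsto (fun i => ∫ x, ((ρ i).normed μ ⋆[ContinuousLinearMap.lsmul ℝ ℝ, μ] f) x * ψ x ∂μ) l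
      (𝓝 (∫ x, f x * ψ x ∂μ)) := by
  set ψ' : E → ℝ := fun x => ψ (-x)
  have hψ' : Continuous ψ' := hψ.comp continuous_neg
  have hψ'_supp : HasCompactSupport ψ' := hψ_supp.comp_homeomorph (Homeomorph.neg E)
  have hf_norm : LocallyIntegrable (fun x => ‖f x‖) μ := fun x => (hf x).norm
  have hpair : ∀ u : E → ℝ, ∫ x, u x * ψ x ∂μ =
      (u ⋆[ContinuousLinearMap.lsmul ℝ ℝ, μ] ψ') 0 := fun u => by
    simp only [convolution_lsmul, ψ', zero_sub, neg_neg, smul_eq_mul]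
  have hassoc : ∀ i, (((ρ i).normed μ ⋆[ContinuousLinearMap.lsmul ℝ ℝ, μ] f)
      ⋆[ContinuousLinearMap.lsmul ℝ ℝ, μ] ψ') 0 =
      ((ρ i).normed μ ⋆[ContinuousLinearMap.lsmul ℝ ℝ, μ]
        (f ⋆[ContinuousLinearMap.lsmul ℝ ℝ, μ] ψ')) 0 := fun i =>
    convolution_assoc _ _ _ _ (fun a b c => smul_assoc a b c)
      (ρ i).continuous_normed.aestronglyMeasurable hf.aestronglyMeasurable
      hψ'.aestronglyMeasurable
      (ae_of_all _ ((ρ i).hasCompactSupport_normed.convolutionExists_left _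
        (ρ i).continuous_normed hf))
      (ae_of_all _ (hψ'_supp.norm.convolutionExists_right _ hf_norm hψ'.norm))
      ((ρ i).hasCompactSupport_normed.norm.convolutionExists_left _
        (ρ i).continuous_normed.norm
        (hψ'_supp.norm.continuous_convolution_right _ hf_norm hψ'.norm).locallyIntegrable 0)
  simp only [hpair, hassoc]
  exact ContDiffBump.convolution_tendsto_right_of_continuous hρ
    (hψ'_supp.continuous_convolution_right _ hf hψ') 0

end Mollification

section GaussianMoments

open ProbabilityTheory

theorem integral_rpow_abs_gaussianReal {q : ℝ} (hq : -1 < q) :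
    ∫ s, |s| ^ q ∂(gaussianReal 0 1) = 2 ^ (q / 2) * Gamma ((q + 1) / 2) / √π := by
  have hdensity : ∀ s : ℝ, gaussianPDFReal 0 1 s * |s| ^ q =
      (√2 * √π)⁻¹ * (|s| ^ q * exp (-(1 / 2) * |s| ^ (2 : ℝ))) := fun s => by
    rw [gaussianPDFReal, rpow_two, sq_abs, NNReal.coe_one, ← sqrt_mul zero_le_two]
    ring_nf
  have hpow : (1 / 2 : ℝ) ^ (-(q + 1) / 2) = 2 ^ (q / 2) * √2 := by
    rw [one_div, inv_rpow zero_le_two, ← rpow_neg zero_le_two, sqrt_eq_rpow,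
      ← rpow_add two_pos]
    ring_nf
  rw [integral_gaussianReal_eq_integral_smul one_ne_zero]
  simp only [smul_eq_mul, hdensity]
  rw [integral_const_mul, integral_comp_abs (f := fun s => s ^ q * exp (-(1 / 2) * s ^ (2 : ℝ))),
    integral_rpow_mul_exp_neg_mul_rpow two_pos hq one_half_pos, hpow]
  field_simp

theorem lintegral_enorm_rpow_gaussianReal {q : ℝ} (hq : 0 ≤ q) :
    ∫⁻ s, ‖s‖ₑ ^ q ∂(gaussianReal 0 1) =
      ENNReal.ofReal (2 ^ (q / 2) * Gamma ((q + 1) / 2) / √π) := by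
  have hq' : -1 < q := by linarith
  have hpos : 0 < 2 ^ (q / 2) * Gamma ((q + 1) / 2) / √π := by
    have := Gamma_pos_of_pos (show 0 < (q + 1) / 2 by linarith)
    positivity
  have hint : Integrable (fun s : ℝ => |s| ^ q) (gaussianReal 0 1) :=
    .of_integral_ne_zero (by rw [integral_rpow_abs_gaussianReal hq']; exact hpos.ne')
  rw [← integral_rpow_abs_gaussianReal hq', ofReal_integral_eq_lintegral_ofReal hint
    (ae_of_all _ fun s => by positivity)]
  simp only [← ENNReal.ofReal_rpow_of_nonneg (abs_nonneg _) hq, ← Real.enorm_eq_ofReal_abs]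

variable {E : Type*} [NormedAddCommGroup E] [InnerProductSpace ℝ E] [FiniteDimensional ℝ E]
  [MeasurableSpace E] [BorelSpace E]

theorem map_inner_stdGaussian (v : E) :
    (stdGaussian E).map (fun z => inner ℝ v z) = (gaussianReal 0 1).map (‖v‖ * ·) := by
  have hmap := IsGaussian.map_eq_gaussianReal (μ := stdGaussian E) (innerSL ℝ v)
  rw [integral_strongDual_stdGaussian, variance_dual_stdGaussian, innerSL_apply_norm] at hmap
  rw [gaussianReal_map_const_mul, mul_zero, mul_one]
  refine hmap.trans ?_
  congr 1
  exact Real.toNNReal_of_nonneg (sq_nonneg _)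

theorem lintegral_enorm_inner_rpow_stdGaussian (v : E) {p : ℝ} (hp : 0 ≤ p) :
    ∫⁻ z, ‖inner ℝ v z‖ₑ ^ p ∂(stdGaussian E) =
      ENNReal.ofReal (2 ^ (p / 2) * Gamma ((p + 1) / 2) / √π) * ‖v‖ₑ ^ p := by
  rw [← lintegral_map (g := fun z : E => inner ℝ v z) (f := fun s : ℝ => ‖s‖ₑ ^ p) (by fun_prop)
    (by fun_prop), map_inner_stdGaussian, lintegral_map (by fun_prop) (by fun_prop)]
  simp only [enorm_mul, enorm_norm, ENNReal.mul_rpow_of_nonneg _ _ hp]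
  rw [lintegral_const_mul _ (by fun_prop), lintegral_enorm_rpow_gaussianReal hp, mul_comm]

theorem two_rpow_mul_Gamma_div_sqrt_pi {p : ℝ} (hp : 0 < p) :
    2 ^ p * Gamma ((p + 1) / 2) / √π = 2 * Gamma p / Gamma (p / 2) := by
  have hduplication := Gamma_mul_Gamma_add_half (p / 2)
  rw [mul_div_cancel₀ p two_ne_zero, ← add_div, rpow_sub two_pos, rpow_one] at hduplication
  rw [div_eq_div_iff (by positivity) (Gamma_pos_of_pos (half_pos hp)).ne', mul_assoc,
    mul_comm (Gamma ((p + 1) / 2)), hduplication]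
  field_simp

theorem lintegral_enorm_inner_sqrt_two_smul_rpow_stdGaussian (v : E) {p : ℝ} (hp : 0 < p) :
    ∫⁻ w, ‖inner ℝ v (√2 • w)‖ₑ ^ p ∂(stdGaussian E) =
      ENNReal.ofReal (2 * Gamma p / Gamma (p / 2)) * ‖v‖ₑ ^ p := by
  have hsqrt : 2 ^ (p / 2) * (2 ^ (p / 2) * Gamma ((p + 1) / 2) / √π) =
      2 * Gamma p / Gamma (p / 2) := by
    rw [← two_rpow_mul_Gamma_div_sqrt_pi hp, ← mul_div_assoc, ← mul_assoc, ← rpow_add two_pos,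
      add_halves]
  have hnorm : ‖√2 • v‖ₑ ^ p = ENNReal.ofReal (2 ^ (p / 2)) * ‖v‖ₑ ^ p := by
    rw [enorm_smul, ENNReal.mul_rpow_of_nonneg _ _ hp.le, Real.enorm_of_nonneg (sqrt_nonneg 2),
      ENNReal.ofReal_rpow_of_nonneg (sqrt_nonneg 2) hp.le, sqrt_eq_rpow, ← rpow_mul zero_le_two,
      one_div_mul_eq_div]
  simp only [real_inner_smul_right, ← real_inner_smul_left]
  rw [lintegral_enorm_inner_rpow_stdGaussian _ hp.le, hnorm, mul_left_comm, ← mul_assoc,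
    ← ENNReal.ofReal_mul (by positivity), hsqrt]

end GaussianMoments

section HeatEnergy

open ProbabilityTheory
open scoped ENNReal Convolution

variable {E : Type*} [NormedAddCommGroup E] [InnerProductSpace ℝ E]

/-- The Gauss–Weierstrass heat kernel at time `t`, as a function of the difference `z = x - y` of
the two space variables. -/
noncomputable def heatKernel (t : ℝ) (z : E) : ℝ :=
  (4 * π * t) ^ (-(Module.finrank ℝ E : ℝ) / 2) * exp (-‖z‖ ^ 2 / (4 * t))

theorem heatKernel_nonneg {t : ℝ} (ht : 0 ≤ t) (z : E) : 0 ≤ heatKernel t z := by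
  unfold heatKernel; positivity

theorem continuous_heatKernel (t : ℝ) : Continuous (heatKernel t : E → ℝ) := by
  unfold heatKernel; fun_prop

theorem tendsto_inv_mul_sub_inner_gradient [CompleteSpace E] {u : E → ℝ} {x : E}
    (hu : DifferentiableAt ℝ u x) (w : E) :
    Tendsto (fun s : ℝ => s⁻¹ * (u (x - s • w) - u x)) (𝓝[≠] 0)
      (𝓝 (-inner ℝ (gradient u x) w)) := by
  have hslope := (hu.hasFDerivAt.hasLineDerivAt (-w)).tendsto_slope_zero
  simpa only [zero_add, zero_smul, add_zero, smul_eq_mul, smul_neg, ← sub_eq_add_neg, map_neg,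
    ← inner_gradient_left] using hslope

variable [FiniteDimensional ℝ E] [MeasurableSpace E] [BorelSpace E]

/-- The heat-semigroup `p`-energy of `f` at time `t`, whose lower limit as `t → 0⁺` is compared
with the `p`-energy of a gradient of `f`. -/
noncomputable def heatEnergy (p : ℝ) (f : E → ℝ) (t : ℝ) : ℝ≥0∞ :=
  ENNReal.ofReal (t ^ (-(p / 2))) *
    ∫⁻ x, ∫⁻ y, ENNReal.ofReal (heatKernel t (x - y) * |f y - f x| ^ p)

theorem integral_heatKernel_mul_cexp_inner {t : ℝ} (ht : 0 < t) (ξ : E) :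
    ∫ z, heatKernel t z • Complex.exp (inner ℝ z ξ * Complex.I) = Complex.exp (-(t * ‖ξ‖ ^ 2)) := by
  have ht4 : 0 < (((4 * t)⁻¹ : ℝ) : ℂ).re := by rw [Complex.ofReal_re]; positivity
  have hconst : ((4 * π * t) ^ (-(Module.finrank ℝ E : ℝ) / 2) : ℝ) *
      ((π : ℂ) / ((4 * t)⁻¹ : ℝ)) ^ (Module.finrank ℝ E / 2 : ℂ) = 1 := by
    have hbase : (π : ℂ) / ((4 * t)⁻¹ : ℝ) = ((4 * π * t : ℝ) : ℂ) := by push_cast; field_simp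
    have hexp : (Module.finrank ℝ E / 2 : ℂ) = ((Module.finrank ℝ E / 2 : ℝ) : ℂ) := by
      push_cast
      rfl
    rw [hbase, hexp, ← Complex.ofReal_cpow (by positivity), ← Complex.ofReal_mul,
      ← rpow_add (by positivity), neg_div, neg_add_cancel, rpow_zero, Complex.ofReal_one]
  calc ∫ z, heatKernel t z • Complex.exp (inner ℝ z ξ * Complex.I)
      = ∫ z, ((4 * π * t) ^ (-(Module.finrank ℝ E : ℝ) / 2) : ℝ) *
          Complex.exp (-((4 * t)⁻¹ : ℝ) * ‖z‖ ^ 2 + Complex.I * inner ℝ ξ z) := by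
        refine integral_congr_ae (ae_of_all _ fun z => ?_)
        simp only [heatKernel, Complex.real_smul, Complex.ofReal_mul, mul_assoc, Complex.ofReal_exp,
          ← Complex.exp_add, real_inner_comm ξ z]
        congr 2
        push_cast
        ring
    _ = Complex.exp (-(t * ‖ξ‖ ^ 2)) := by
        rw [integral_const_mul, GaussianFourier.integral_cexp_neg_mul_sq_norm_add ht4, ← mul_assoc,
          hconst, one_mul, Complex.I_sq]
        push_cast
        field_simp

theorem integrable_heatKernel {t : ℝ} (ht : 0 < t) : Integrable (heatKernel t : E → ℝ) := by
  have hexp : heatKernel t = fun z : E => (4 * π * t) ^ (-(Module.finrank ℝ E : ℝ) / 2) *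
      exp (-(4 * t)⁻¹ * ‖z‖ ^ 2) := funext fun z => by
    rw [heatKernel]
    ring_nf
  rw [hexp]
  refine .const_mul (.of_integral_ne_zero ?_) _
  rw [GaussianFourier.integral_rexp_neg_mul_sq_norm (by positivity)]
  positivity

theorem withDensity_heatKernel {t : ℝ} (ht : 0 < t) :
    (volume : Measure E).withDensity (fun z => ENNReal.ofReal (heatKernel t z)) =
      (stdGaussian E).map (√(2 * t) • ·) := by
  have : IsFiniteMeasure ((volume : Measure E).withDensity fun z =>
    ENNReal.ofReal (heatKernel t z)) := isFiniteMeasure_withDensity_ofReal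
      (integrable_heatKernel ht).hasFiniteIntegral
  refine Measure.ext_of_charFun (funext fun ξ => ?_)
  calc charFun (volume.withDensity fun z => ENNReal.ofReal (heatKernel t z)) ξ
      = ∫ z, heatKernel t z • Complex.exp (inner ℝ z ξ * Complex.I) := by
        rw [charFun_apply, integral_withDensity_eq_integral_toReal_smul
          (continuous_heatKernel t).measurable.ennreal_ofReal
          (ae_of_all _ fun _ => ENNReal.ofReal_lt_top)]
        simp only [ENNReal.toReal_ofReal (heatKernel_nonneg ht.le _)]
    _ = Complex.exp (-(t * ‖ξ‖ ^ 2)) := integral_heatKernel_mul_cexp_inner ht ξ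
    _ = charFun ((stdGaussian E).map (√(2 * t) • ·)) ξ := by
        rw [charFun_map_smul, charFun_stdGaussian, norm_smul, norm_of_nonneg (sqrt_nonneg _),
          Complex.ofReal_mul, mul_pow, ← Complex.ofReal_pow √_, sq_sqrt (by positivity)]
        push_cast
        ring_nf

theorem heatEnergy_eq_lintegral_stdGaussian {t : ℝ} (ht : 0 < t) {f : E → ℝ}
    (hf : AEStronglyMeasurable f volume) {p : ℝ} (hp : 0 ≤ p) :
    heatEnergy p f t = ENNReal.ofReal (t ^ (-(p / 2))) *
      ∫⁻ w, (∫⁻ x, ‖f (x - √(2 * t) • w) - f x‖ₑ ^ p) ∂(stdGaussian E) := by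
  have hK : Measurable fun z : E => ENNReal.ofReal (heatKernel t z) :=
    (continuous_heatKernel t).measurable.ennreal_ofReal
  have hf_diff : AEMeasurable (fun q : E × E => ‖f (q.1 - q.2) - f q.1‖ₑ ^ p)
      ((volume : Measure E).prod volume) :=
    ((hf.comp_quasiMeasurePreserving (quasiMeasurePreserving_sub_of_right_invariant _ _)).sub
      hf.comp_fst).enorm.pow_const p
  have hf_lintegral : AEMeasurable (fun z => ∫⁻ x, ‖f (x - z) - f x‖ₑ ^ p) volume :=
    hf_diff.lintegral_prod_left'
  unfold heatEnergy
  congr 1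
  calc ∫⁻ x, ∫⁻ y, ENNReal.ofReal (heatKernel t (x - y) * |f y - f x| ^ p)
      = ∫⁻ x, ∫⁻ y, ENNReal.ofReal (heatKernel t (x - y)) * ‖f y - f x‖ₑ ^ p := by
        simp only [ENNReal.ofReal_mul (heatKernel_nonneg ht.le _), Real.enorm_eq_ofReal_abs,
          ENNReal.ofReal_rpow_of_nonneg (abs_nonneg _) hp]
    _ = ∫⁻ x, ∫⁻ z, ENNReal.ofReal (heatKernel t z) * ‖f (x - z) - f x‖ₑ ^ p :=
        lintegral_congr fun x => by
          rw [← lintegral_sub_left_eq_self _ x]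
          simp only [sub_sub_cancel]
    _ = ∫⁻ z, ∫⁻ x, ENNReal.ofReal (heatKernel t z) * ‖f (x - z) - f x‖ₑ ^ p :=
        lintegral_lintegral_swap ((hK.comp measurable_snd).aemeasurable.mul hf_diff)
    _ = ∫⁻ z, (∫⁻ x, ‖f (x - z) - f x‖ₑ ^ p)
          ∂(volume.withDensity fun z => ENNReal.ofReal (heatKernel t z)) := by
        rw [lintegral_withDensity_eq_lintegral_mul₀ hK.aemeasurable hf_lintegral]
        simp only [Pi.mul_apply, lintegral_const_mul' _ _ ENNReal.ofReal_ne_top]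
    _ = ∫⁻ w, (∫⁻ x, ‖f (x - √(2 * t) • w) - f x‖ₑ ^ p) ∂(stdGaussian E) := by
        have hf_map := hf_lintegral.mono_ac (withDensity_absolutelyContinuous _ fun z =>
          ENNReal.ofReal (heatKernel t z))
        rw [withDensity_heatKernel ht] at hf_map ⊢
        exact lintegral_map' hf_map (by fun_prop)

theorem heatEnergy_eq_lintegral_differenceQuotient {t : ℝ} (ht : 0 < t) {f : E → ℝ}
    (hf : AEStronglyMeasurable f volume) {p : ℝ} (hp : 0 ≤ p) :
    heatEnergy p f t =
      ∫⁻ w, (∫⁻ x, ‖(√t)⁻¹ * (f (x - √t • √2 • w) - f x)‖ₑ ^ p) ∂(stdGaussian E) := by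
  have hscale : ENNReal.ofReal (t ^ (-(p / 2))) = ‖(√t)⁻¹‖ₑ ^ p := by
    rw [Real.enorm_of_nonneg (by positivity), ENNReal.ofReal_rpow_of_nonneg (by positivity) hp,
      inv_rpow (sqrt_nonneg t), sqrt_eq_rpow, ← rpow_mul ht.le, rpow_neg ht.le, one_div_mul_eq_div]
  have hscale_top : ‖(√t)⁻¹‖ₑ ^ p ≠ ⊤ := by rw [← hscale]; exact ENNReal.ofReal_ne_top
  rw [heatEnergy_eq_lintegral_stdGaussian ht hf hp, hscale, mul_comm 2 t, sqrt_mul ht.le]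
  simp only [enorm_mul, ENNReal.mul_rpow_of_nonneg _ _ hp, mul_smul]
  simp only [lintegral_const_mul' _ _ hscale_top]

theorem heatEnergy_euclideanSpace {n : ℕ} (p : ℝ) (f : EuclideanSpace ℝ (Fin n) → ℝ) :
    heatEnergy p f = fun t => ENNReal.ofReal (t ^ (-(p / 2))) *
      ∫⁻ x, ∫⁻ y, ENNReal.ofReal
        ((4 * π * t) ^ (-(n : ℝ) / 2) * exp (-‖x - y‖ ^ 2 / (4 * t)) * |f y - f x| ^ p) := by
  funext t
  rw [heatEnergy]
  simp only [heatKernel, finrank_euclideanSpace_fin]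

theorem heatEnergy_convolution_le {ρ : E → ℝ} (hρ : ∀ w, 0 ≤ ρ w) (hρ_int : ∫ w, ρ w = 1)
    {f : E → ℝ} (hf : AEStronglyMeasurable f volume)
    (hρf : ConvolutionExists ρ f (ContinuousLinearMap.lsmul ℝ ℝ) volume)
    (hρf_meas : AEStronglyMeasurable (ρ ⋆[ContinuousLinearMap.lsmul ℝ ℝ, volume] f) volume)
    {p : ℝ} (hp : 1 ≤ p) {t : ℝ} (ht : 0 < t) :
    heatEnergy p (ρ ⋆[ContinuousLinearMap.lsmul ℝ ℝ, volume] f) t ≤ heatEnergy p f t := by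
  have hp₀ : 0 ≤ p := zero_le_one.trans hp
  rw [heatEnergy_eq_lintegral_stdGaussian ht hρf_meas hp₀,
    heatEnergy_eq_lintegral_stdGaussian ht hf hp₀]
  refine mul_le_mul_right (lintegral_mono fun w => ?_) _
  exact lintegral_convolution_sub_rpow_le hρ hρ_int hf hρf hp _

theorem lintegral_gradient_le_liminf_heatEnergy {u : E → ℝ} (hu : Differentiable ℝ u) {p : ℝ}
    (hp : 0 < p) :
    ENNReal.ofReal (2 * Gamma p / Gamma (p / 2)) * ∫⁻ x, ‖gradient u x‖ₑ ^ p ≤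
      liminf (heatEnergy p u) (𝓝[>] 0) := by
  have hu_meas := hu.continuous.measurable
  have hgrad : Measurable (gradient u) :=
    (InnerProductSpace.toDual ℝ E).symm.continuous.measurable.comp (measurable_fderiv ℝ u)
  set Q : ℝ → E → E → ℝ≥0∞ := fun t w x => ‖(√t)⁻¹ * (u (x - √t • √2 • w) - u x)‖ₑ ^ p
  have hQ_meas : ∀ t, Measurable fun q : E × E => Q t q.1 q.2 := fun t => by fun_prop
  have hsqrt : Tendsto (fun t : ℝ => √t) (𝓝[>] 0) (𝓝[≠] 0) :=
    tendsto_nhdsWithin_iff.2 ⟨(continuous_sqrt.tendsto' 0 0 sqrt_zero).mono_left nhdsWithin_le_nhds,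
      eventually_mem_nhdsWithin.mono fun t ht => (sqrt_pos.2 ht).ne'⟩
  have hQ_lim : ∀ w x, Tendsto (fun t => Q t w x) (𝓝[>] 0)
      (𝓝 (‖inner ℝ (gradient u x) (√2 • w)‖ₑ ^ p)) := fun w x => by
    rw [← enorm_neg]
    exact (((ENNReal.continuous_rpow_const.comp continuous_enorm).tendsto _).comp
      (tendsto_inv_mul_sub_inner_gradient (hu x) (√2 • w))).comp hsqrt
  calc ENNReal.ofReal (2 * Gamma p / Gamma (p / 2)) * ∫⁻ x, ‖gradient u x‖ₑ ^ p
      = ∫⁻ x, ∫⁻ w, ‖inner ℝ (gradient u x) (√2 • w)‖ₑ ^ p ∂(stdGaussian E) := by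
        simp only [lintegral_enorm_inner_sqrt_two_smul_rpow_stdGaussian _ hp]
        rw [lintegral_const_mul' _ _ ENNReal.ofReal_ne_top]
    _ = ∫⁻ w, (∫⁻ x, ‖inner ℝ (gradient u x) (√2 • w)‖ₑ ^ p) ∂(stdGaussian E) :=
        lintegral_lintegral_swap (by fun_prop)
    _ ≤ ∫⁻ w, liminf (fun t => ∫⁻ x, Q t w x) (𝓝[>] 0) ∂(stdGaussian E) := by
        refine lintegral_mono fun w => ?_
        simp only [← (hQ_lim w _).liminf_eq]
        exact lintegral_liminf_le fun t => (hQ_meas t).of_uncurry_left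
    _ ≤ liminf (fun t => ∫⁻ w, (∫⁻ x, Q t w x) ∂(stdGaussian E)) (𝓝[>] 0) :=
        lintegral_liminf_le fun t => (hQ_meas t).lintegral_prod_right'
    _ = liminf (heatEnergy p u) (𝓝[>] 0) :=
        (liminf_congr (eventually_mem_nhdsWithin.mono fun t ht =>
          heatEnergy_eq_lintegral_differenceQuotient ht hu_meas.aestronglyMeasurable hp.le)).symm

theorem lintegral_gradient_convolution_le_liminf_heatEnergy (ρ : ContDiffBump (0 : E)) {f : E → ℝ}
    (hf : LocallyIntegrable f volume) {p : ℝ} (hp : 1 ≤ p) :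
    ENNReal.ofReal (2 * Gamma p / Gamma (p / 2)) *
        ∫⁻ x, ‖gradient (ρ.normed volume ⋆[ContinuousLinearMap.lsmul ℝ ℝ, volume] f) x‖ₑ ^ p ≤
      liminf (heatEnergy p f) (𝓝[>] 0) := by
  have hρf : ContDiff ℝ 1 (ρ.normed volume ⋆[ContinuousLinearMap.lsmul ℝ ℝ, volume] f) :=
    ρ.hasCompactSupport_normed.contDiff_convolution_left _ ρ.contDiff_normed hf
  refine (lintegral_gradient_le_liminf_heatEnergy (hρf.differentiable one_ne_zero)
    (one_pos.trans_le hp)).trans (liminf_le_liminf (eventually_mem_nhdsWithin.mono fun t ht => ?_))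
  exact heatEnergy_convolution_le ρ.nonneg_normed ρ.integral_normed hf.aestronglyMeasurable
    (ρ.hasCompactSupport_normed.convolutionExists_left _ ρ.continuous_normed hf)
    hρf.continuous.aestronglyMeasurable hp ht

end HeatEnergy

section Main

open scoped ENNReal

theorem mul_lintegral_enorm_rpow_le_iff {α F : Type*} [MeasurableSpace α] {μ : Measure α}
    [NormedAddCommGroup F] {p : ℝ} (hp : 0 < p) {c : ℝ≥0∞} (hc : c ≠ 0) (hc_top : c ≠ ⊤) {L : ℝ≥0∞}
    {G : α → F} :
    c * ∫⁻ x, ‖G x‖ₑ ^ p ∂μ ≤ L ↔ eLpNorm G (ENNReal.ofReal p) μ ≤ (L / c) ^ (1 / p) := by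
  rw [eLpNorm_eq_lintegral_rpow_enorm_toReal (ENNReal.ofReal_pos.2 hp).ne' ENNReal.ofReal_ne_top,
    ENNReal.toReal_ofReal hp.le, ENNReal.rpow_le_rpow_iff (one_div_pos.2 hp),
    ENNReal.le_div_iff_mul_le (.inl hc) (.inl hc_top), mul_comm]

theorem exists_seq_contDiffBump_tendsto_rOut (E : Type*) [NormedAddCommGroup E]
    [NormedSpace ℝ E] (c : E) :
    ∃ ρ : ℕ → ContDiffBump c, Tendsto (fun k => (ρ k).rOut) atTop (𝓝 0) :=
  ⟨fun k => ⟨1 / (k + 2), 1 / (k + 1), by positivity, by gcongr; norm_num⟩,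
    tendsto_one_div_add_atTop_nhds_zero_nat⟩

theorem liminf_finite_implies_weak_gradient_general {E : Type*} [NormedAddCommGroup E]
    [InnerProductSpace ℝ E] [FiniteDimensional ℝ E] [MeasurableSpace E] [BorelSpace E] {p : ℝ}
    (hp : 1 < p) {f : E → ℝ} (hf : LocallyIntegrable f volume)
    (hliminf : liminf (heatEnergy p f) (𝓝[>] 0) < ⊤) :
    ∃ g : E → E, MemLp g (ENNReal.ofReal p) volume ∧ IsWeakGradient f g ∧
      ENNReal.ofReal (2 * Gamma p / Gamma (p / 2)) * ∫⁻ x, ‖g x‖ₑ ^ p ≤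
        liminf (heatEnergy p f) (𝓝[>] 0) := by
  have hp₀ : 0 < p := one_pos.trans hp
  have hc : ENNReal.ofReal (2 * Gamma p / Gamma (p / 2)) ≠ 0 :=
    (ENNReal.ofReal_pos.2 (div_pos (mul_pos two_pos (Gamma_pos_of_pos hp₀))
      (Gamma_pos_of_pos (half_pos hp₀)))).ne'
  have hnorm_le {G : E → E} := mul_lintegral_enorm_rpow_le_iff (μ := volume) (G := G)
    (L := liminf (heatEnergy p f) (𝓝[>] 0)) hp₀ hc ENNReal.ofReal_ne_top
  obtain ⟨ρ, hρ⟩ := exists_seq_contDiffBump_tendsto_rOut E 0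
  obtain ⟨g, hg, hg_le, hfg⟩ := exists_isWeakGradient_of_tendsto (f := f)
    (ENNReal.one_lt_ofReal.2 hp) ENNReal.ofReal_ne_top
    (fun k => (ρ k).hasCompactSupport_normed.contDiff_convolution_left
      (ContinuousLinearMap.lsmul ℝ ℝ) (ρ k).contDiff_normed hf)
    (ENNReal.rpow_ne_top_of_nonneg (one_div_pos.2 hp₀).le (ENNReal.div_ne_top hliminf.ne hc))
    (fun k => hnorm_le.1 (lintegral_gradient_convolution_le_liminf_heatEnergy (ρ k) hf hp.le))
    (fun ψ hψ hψ_supp => tendsto_integral_convolution_mul hρ hf hψ hψ_supp)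
  exact ⟨g, hg, hfg, hnorm_le.2 hg_le⟩

end Main

theorem liminf_finite_implies_weak_gradient (n : ℕ) (hn : 1 ≤ n) (p : ℝ) (hp : 1 < p)
    (f : EuclideanSpace ℝ (Fin n) → ℝ) (hf : MemLp f (ENNReal.ofReal p) volume)
    (hliminf : Filter.liminf (fun t : ℝ =>
        ENNReal.ofReal (t ^ (-(p / 2))) *
          ∫⁻ x, ∫⁻ y, ENNReal.ofReal
            ((4 * π * t) ^ (-(n : ℝ) / 2) * Real.exp (-‖x - y‖ ^ 2 / (4 * t)) *
              |f y - f x| ^ p)) (𝓝[>] (0 : ℝ)) < ⊤) :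
    ∃ g : EuclideanSpace ℝ (Fin n) → EuclideanSpace ℝ (Fin n),
      Integrable (fun x => ‖g x‖ ^ p) ∧
      (∀ φ : EuclideanSpace ℝ (Fin n) → ℝ, ContDiff ℝ (⊤ : ℕ∞) φ → HasCompactSupport φ →
        ∀ i : Fin n,
          ∫ x, f x * fderiv ℝ φ x (EuclideanSpace.single i 1)
            = -∫ x, g x i * φ x) ∧
      ENNReal.ofReal (2 * Real.Gamma p / Real.Gamma (p / 2)) *
          ∫⁻ x, ENNReal.ofReal (‖g x‖ ^ p)
        ≤ Filter.liminf (fun t : ℝ =>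
            ENNReal.ofReal (t ^ (-(p / 2))) *
              ∫⁻ x, ∫⁻ y, ENNReal.ofReal
                ((4 * π * t) ^ (-(n : ℝ) / 2) * Real.exp (-‖x - y‖ ^ 2 / (4 * t)) *
                  |f y - f x| ^ p)) (𝓝[>] (0 : ℝ)) := by
  have hp₀ : 0 < p := one_pos.trans hp
  obtain ⟨g, hg, hfg, hg_le⟩ := liminf_finite_implies_weak_gradient_general hp (f := f)
    (hf.locallyIntegrable (ENNReal.one_le_ofReal.2 hp.le))
    (by rwa [heatEnergy_euclideanSpace])
  refine ⟨g, ?_, fun φ hφ hφ_supp i => ?_, ?_⟩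
  · simpa only [ENNReal.toReal_ofReal hp₀.le] using
      hg.integrable_norm_rpow (ENNReal.ofReal_pos.2 hp₀).ne' ENNReal.ofReal_ne_top
  · simpa only [EuclideanSpace.inner_single_right, one_mul, conj_trivial] using
      hfg φ hφ hφ_supp (EuclideanSpace.single i 1)
  · simpa only [heatEnergy_euclideanSpace, ← ofReal_norm,
      ENNReal.ofReal_rpow_of_nonneg (norm_nonneg _) hp₀.le] using hg_le
end

section
/- Let n ≥ 1, 1 ≤ p < ∞, and 0 < s < 1. Then for every f ∈ L^p(ℝⁿ) one has the identity (in [0,∞]) 𝒩_{s,p}(f)^p = (2^{sp} Γ((n+sp)/2) / π^{n/2}) · ∫_{ℝⁿ} ∫_{ℝⁿ} |f(x) − f(y)|^p / ‖x−y‖^{n+sp} dy dx. -/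
open Real MeasureTheory Filter Topology

/-! Tonelli moves the time integral inside. For fixed `x ≠ y` the substitution `u = 1 / t` turns it
into a Gamma integral, whose value is a constant multiple of `dist x y ^ (-(d + s * p))`; on the
diagonal the increment `f x - f y` vanishes. Nothing about the geometry of the space enters. -/

theorem integral_rpow_neg_sub_one_mul_exp_neg_div {a b : ℝ} (ha : 0 < a) (hb : 0 < b) :
    ∫ t in Set.Ioi (0 : ℝ), t ^ (-a - 1) * exp (-(b / t)) = (1 / b) ^ a * Gamma a := by
  rw [← integral_rpow_mul_exp_neg_mul_Ioi ha hb,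
    ← integral_comp_rpow_Ioi (fun u ↦ u ^ (a - 1) * exp (-(b * u))) (neg_ne_zero.mpr one_ne_zero)]
  refine setIntegral_congr_fun measurableSet_Ioi fun t (ht : 0 < t) ↦ ?_
  have jacobian : t ^ (-a - 1) = t ^ (-1 - 1 : ℝ) * (t ^ (-1 : ℝ)) ^ (a - 1) := by
    rw [← rpow_mul ht.le, ← rpow_add ht]
    ring_nf
  simp only [jacobian, rpow_neg_one, div_eq_mul_inv, abs_neg, abs_one, one_mul, smul_eq_mul,
    mul_assoc]

theorem lintegral_rpow_neg_sub_one_mul_exp_neg_div {a b : ℝ} (ha : 0 < a) (hb : 0 < b) :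
    ∫⁻ t in Set.Ioi (0 : ℝ), ENNReal.ofReal (t ^ (-a - 1) * exp (-(b / t)))
      = ENNReal.ofReal ((1 / b) ^ a * Gamma a) := by
  have value := integral_rpow_neg_sub_one_mul_exp_neg_div ha hb
  have value_pos : 0 < (1 / b) ^ a * Gamma a := mul_pos (by positivity) (Gamma_pos_of_pos ha)
  rw [← value, ofReal_integral_eq_lintegral_ofReal]
  · exact .of_integral_ne_zero (value ▸ value_pos.ne')
  · filter_upwards [self_mem_ae_restrict measurableSet_Ioi] with t (ht : 0 < t)
    positivity

/-- The radial profile of the Gauss–Weierstrass kernel in dimension `d`: on `ℝⁿ` one has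
`p_t(x, y) = heatProfile n t ‖x - y‖`. The dimension is a real parameter, as only its value in the
exponent matters. -/
noncomputable def heatProfile (d t r : ℝ) : ℝ :=
  (4 * π * t) ^ (-d / 2) * exp (-r ^ 2 / (4 * t))

theorem measurable_heatProfile (d : ℝ) :
    Measurable fun q : ℝ × ℝ ↦ heatProfile d q.1 q.2 := by
  unfold heatProfile
  fun_prop

theorem rpow_mul_heatProfile (a d r : ℝ) {t : ℝ} (ht : 0 < t) :
    t ^ (-(a / 2 + 1)) * heatProfile d t r
      = (4 * π) ^ (-d / 2) * (t ^ (-((d + a) / 2) - 1) * exp (-(r ^ 2 / 4 / t))) := by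
  have exponent : t ^ (-((d + a) / 2) - 1) = t ^ (-(a / 2 + 1)) * t ^ (-d / 2) := by
    rw [← rpow_add ht]
    ring_nf
  rw [heatProfile, mul_rpow (by positivity) ht.le, exponent, neg_div (4 * t), div_div]
  ring

theorem four_pi_rpow_mul_rpow_div_sq (a d : ℝ) {r : ℝ} (hr : 0 < r) :
    (4 * π) ^ (-d / 2) * (1 / (r ^ 2 / 4)) ^ ((d + a) / 2)
      = 2 ^ a / π ^ (d / 2) * (1 / r ^ (d + a)) := by
  have four_rpow (c : ℝ) : (4 : ℝ) ^ (c / 2) = 2 ^ c := by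
    rw [show (4 : ℝ) = 2 ^ (2 : ℝ) by norm_num, ← rpow_mul two_pos.le,
      mul_div_cancel₀ _ two_ne_zero]
  have sq_rpow : (r ^ 2) ^ ((d + a) / 2) = r ^ (d + a) := by
    rw [← rpow_two, ← rpow_mul hr.le, mul_div_cancel₀ _ two_ne_zero]
  rw [one_div_div, div_rpow (by norm_num) (by positivity), mul_rpow (by norm_num) pi_pos.le,
    neg_div, rpow_neg pi_pos.le, ← neg_div, four_rpow, four_rpow, sq_rpow, rpow_add two_pos,
    rpow_neg two_pos.le]
  field_simp

theorem lintegral_rpow_mul_heatProfile {a d r : ℝ} (hda : 0 < d + a) (hr : 0 < r) :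
    ∫⁻ t in Set.Ioi (0 : ℝ), ENNReal.ofReal (t ^ (-(a / 2 + 1)) * heatProfile d t r)
      = ENNReal.ofReal (2 ^ a * Gamma ((d + a) / 2) / π ^ (d / 2) * (1 / r ^ (d + a))) := by
  calc ∫⁻ t in Set.Ioi (0 : ℝ), ENNReal.ofReal (t ^ (-(a / 2 + 1)) * heatProfile d t r)
    _ = ∫⁻ t in Set.Ioi (0 : ℝ), ENNReal.ofReal ((4 * π) ^ (-d / 2)) *
          ENNReal.ofReal (t ^ (-((d + a) / 2) - 1) * exp (-(r ^ 2 / 4 / t))) := by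
      refine setLIntegral_congr_fun measurableSet_Ioi fun t ht ↦ ?_
      simp only [rpow_mul_heatProfile a d r ht]
      exact ENNReal.ofReal_mul (by positivity)
    _ = ENNReal.ofReal
          ((4 * π) ^ (-d / 2) * ((1 / (r ^ 2 / 4)) ^ ((d + a) / 2) * Gamma ((d + a) / 2))) := by
      rw [lintegral_const_mul' _ _ ENNReal.ofReal_ne_top,
        lintegral_rpow_neg_sub_one_mul_exp_neg_div (half_pos hda) (by positivity),
        ← ENNReal.ofReal_mul (by positivity)]
    _ = ENNReal.ofReal (2 ^ a * Gamma ((d + a) / 2) / π ^ (d / 2) * (1 / r ^ (d + a))) := by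
      rw [← mul_assoc, four_pi_rpow_mul_rpow_div_sq a d hr]
      ring_nf

theorem lintegral_rpow_mul_heatProfile_dist_mul {X F : Type*} [MetricSpace X]
    [SeminormedAddCommGroup F] (f : X → F) {d s p : ℝ} (hp : 0 < p) (hdsp : 0 < d + s * p)
    (x y : X) :
    (∫⁻ t in Set.Ioi (0 : ℝ),
        ENNReal.ofReal (t ^ (-(s * p / 2 + 1)) * heatProfile d t (dist x y))) *
          ENNReal.ofReal (‖f x - f y‖ ^ p)
      = ENNReal.ofReal (2 ^ (s * p) * Gamma ((d + s * p) / 2) / π ^ (d / 2)) *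
          ENNReal.ofReal (‖f x - f y‖ ^ p / dist x y ^ (d + s * p)) := by
  obtain rfl | hxy := eq_or_ne x y
  · simp [zero_rpow hp.ne']
  · have constant_nonneg : 0 ≤ 2 ^ (s * p) * Gamma ((d + s * p) / 2) / π ^ (d / 2) := by
      have := Gamma_pos_of_pos (half_pos hdsp)
      positivity
    rw [lintegral_rpow_mul_heatProfile hdsp (dist_pos.mpr hxy),
      ← ENNReal.ofReal_mul' (by positivity), ← ENNReal.ofReal_mul constant_nonneg]
    ring_nf

theorem lintegral_lintegral_mul_right_swap {T Z : Type*} [MeasurableSpace T] [MeasurableSpace Z]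
    {τ : Measure T} {ν : Measure Z} [SFinite τ] [SFinite ν] {k : T → Z → ENNReal} {w : Z → ENNReal}
    (hk : Measurable (Function.uncurry k)) (hw : AEMeasurable w ν) :
    ∫⁻ t, ∫⁻ z, k t z * w z ∂ν ∂τ = ∫⁻ z, (∫⁻ t, k t z ∂τ) * w z ∂ν := by
  rw [lintegral_lintegral_swap (hk.aemeasurable.mul hw.comp_snd)]
  exact lintegral_congr fun z ↦ lintegral_mul_const _ (hk.comp measurable_prodMk_right)

theorem aemeasurable_norm_sub_rpow {X F : Type*} [MeasurableSpace X] [SeminormedAddCommGroup F]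
    {μ : Measure X} [SFinite μ] {f : X → F} (hf : AEStronglyMeasurable f μ) (p : ℝ) :
    AEMeasurable (fun z : X × X ↦ ‖f z.1 - f z.2‖ ^ p) (μ.prod μ) :=
  (hf.comp_fst.sub hf.comp_snd).norm.aemeasurable.pow_const p

/-- The `p`-th power `𝒩_{s,p}(f)^p` of the heat-semigroup Besov seminorm, for the Gaussian kernel
of dimension `d` on a metric measure space. -/
noncomputable def besovEnergy {X F : Type*} [PseudoMetricSpace X] [MeasurableSpace X]
    [SeminormedAddCommGroup F] (d s p : ℝ) (μ : Measure X) (f : X → F) : ENNReal :=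
  ∫⁻ t in Set.Ioi (0 : ℝ), ENNReal.ofReal (t ^ (-(s * p / 2 + 1))) *
    ∫⁻ x, ∫⁻ y, ENNReal.ofReal (heatProfile d t (dist x y) * ‖f y - f x‖ ^ p) ∂μ ∂μ

/-- The `p`-th power of the Aronszajn–Gagliardo–Slobedetzky seminorm of order `s`, with dimension
`d`. For `0 < p` the diagonal contributes nothing, its integrand being `0 / 0 = 0`. -/
noncomputable def gagliardoEnergy {X F : Type*} [PseudoMetricSpace X] [MeasurableSpace X]
    [SeminormedAddCommGroup F] (d s p : ℝ) (μ : Measure X) (f : X → F) : ENNReal :=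
  ∫⁻ x, ∫⁻ y, ENNReal.ofReal (‖f x - f y‖ ^ p / dist x y ^ (d + s * p)) ∂μ ∂μ

section Energies

variable {X F : Type*} [PseudoMetricSpace X] [SecondCountableTopology X] [MeasurableSpace X]
  [OpensMeasurableSpace X] [SeminormedAddCommGroup F] {μ : Measure X} [SFinite μ] {f : X → F}

theorem besovEnergy_eq_lintegral_prod (d s p : ℝ) (hf : AEStronglyMeasurable f μ) :
    besovEnergy d s p μ f = ∫⁻ t in Set.Ioi (0 : ℝ), ∫⁻ z : X × X,
      ENNReal.ofReal (t ^ (-(s * p / 2 + 1)) * heatProfile d t (dist z.1 z.2)) *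
        ENNReal.ofReal (‖f z.1 - f z.2‖ ^ p) ∂μ.prod μ := by
  refine setLIntegral_congr_fun measurableSet_Ioi fun t (ht : 0 < t) ↦ ?_
  have kernel : Measurable fun z : X × X ↦ heatProfile d t (dist z.1 z.2) :=
    (measurable_heatProfile d).comp (measurable_const.prodMk measurable_dist)
  simp only [norm_sub_rev (f _) (f _)]
  rw [lintegral_lintegral
      (kernel.aemeasurable.mul (aemeasurable_norm_sub_rpow hf p)).ennreal_ofReal,
    ← lintegral_const_mul' _ _ ENNReal.ofReal_ne_top]
  refine lintegral_congr fun z ↦ ?_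
  rw [ENNReal.ofReal_mul' (by positivity), ENNReal.ofReal_mul (by positivity), mul_assoc]

theorem gagliardoEnergy_eq_lintegral_prod (d s p : ℝ) (hf : AEStronglyMeasurable f μ) :
    gagliardoEnergy d s p μ f = ∫⁻ z : X × X,
      ENNReal.ofReal (‖f z.1 - f z.2‖ ^ p / dist z.1 z.2 ^ (d + s * p)) ∂μ.prod μ :=
  lintegral_lintegral ((aemeasurable_norm_sub_rpow hf p).div
    (measurable_dist.pow_const _).aemeasurable).ennreal_ofReal

end Energies

theorem besov_equals_gagliardo_general {X F : Type*} [MetricSpace X] [SecondCountableTopology X]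
    [MeasurableSpace X] [OpensMeasurableSpace X] [SeminormedAddCommGroup F] {μ : Measure X}
    [SFinite μ] {f : X → F} {d s p : ℝ} (hp : 0 < p) (hdsp : 0 < d + s * p)
    (hf : AEStronglyMeasurable f μ) :
    besovEnergy d s p μ f
      = ENNReal.ofReal (2 ^ (s * p) * Gamma ((d + s * p) / 2) / π ^ (d / 2)) *
          gagliardoEnergy d s p μ f := by
  have kernel : Measurable fun q : ℝ × X × X ↦
      ENNReal.ofReal (q.1 ^ (-(s * p / 2 + 1)) * heatProfile d q.1 (dist q.2.1 q.2.2)) :=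
    ((measurable_fst.pow_const _).mul <| (measurable_heatProfile d).comp <|
      measurable_fst.prodMk <| measurable_dist.comp measurable_snd).ennreal_ofReal
  rw [besovEnergy_eq_lintegral_prod d s p hf, gagliardoEnergy_eq_lintegral_prod d s p hf,
    lintegral_lintegral_mul_right_swap kernel (aemeasurable_norm_sub_rpow hf p).ennreal_ofReal,
    ← lintegral_const_mul' _ _ ENNReal.ofReal_ne_top]
  exact lintegral_congr fun z ↦ lintegral_rpow_mul_heatProfile_dist_mul f hp hdsp z.1 z.2

theorem besov_equals_gagliardo (n : ℕ) (hn : 1 ≤ n) (p : ℝ) (hp : 1 ≤ p)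
    (s : ℝ) (hs0 : 0 < s) (hs1 : s < 1)
    (f : EuclideanSpace ℝ (Fin n) → ℝ) (hf : MemLp f (ENNReal.ofReal p) volume) :
    (∫⁻ t in Set.Ioi (0 : ℝ),
        ENNReal.ofReal (t ^ (-(s * p / 2 + 1))) *
          ∫⁻ x, ∫⁻ y, ENNReal.ofReal
            ((4 * π * t) ^ (-(n : ℝ) / 2) * Real.exp (-‖x - y‖ ^ 2 / (4 * t)) *
              |f y - f x| ^ p))
      = ENNReal.ofReal (2 ^ (s * p) * Real.Gamma (((n : ℝ) + s * p) / 2) / π ^ ((n : ℝ) / 2)) *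
          ∫⁻ x, ∫⁻ y, ENNReal.ofReal (|f x - f y| ^ p / ‖x - y‖ ^ ((n : ℝ) + s * p)) := by
  simpa only [besovEnergy, gagliardoEnergy, heatProfile, dist_eq_norm, Real.norm_eq_abs] using
    besov_equals_gagliardo_general (d := n) (s := s) (by positivity) (by positivity)
      hf.aestronglyMeasurable
end
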